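/- Let φ : X → ℝ be a continuous potential on X = 𝒜^(ℤ^d) such that Σ_{n≥1} n^{d−1} var_n φ < ∞. Then φ does not have a freezing phase transition: there is no β_c ∈ ℝ such that ES(βφ) = ES(β′φ) for all β, β′ > β_c while ES(βφ) ≠ ES(β′φ) whenever β < β_c < β′. -/

import Mathlib

open MeasureTheory Filter Topology
open scoped ENNReal Classical

namespace Freezing

/-- The configuration space `X = 𝒜^(ℤ^d)`. -/
abbrev Cfg (d : ℕ) (A : Type) : Type := (Fin d → ℤ) → A

section Defs

variable {d : ℕ} {A : Type} [Fintype A] [TopologicalSpace A] [DiscreteTopology A]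
  [MeasurableSpace A] [BorelSpace A]

/-- The shift action: `(σ^n x)_m = x_{n+m}`. -/
def shift (n : Fin d → ℤ) (x : Cfg d A) : Cfg d A := fun m => x (n + m)

/-- Shift-invariance of a measure. -/
def Invariant (μ : Measure (Cfg d A)) : Prop :=
  ∀ n : Fin d → ℤ, Measure.map (shift n) μ = μ

/-- Cylinder set `[w]` for a pattern `w` on `E_n = ([0,n-1] ∩ ℤ)^d`. -/
def cylE (n : ℕ) (w : (Fin d → Fin n) → A) : Set (Cfg d A) :=
  { x | ∀ m : Fin d → Fin n, x (fun i => ((m i : ℕ) : ℤ)) = w m }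

/-- Measure-theoretic entropy `h(μ) = inf_{n ≥ 1} n^{-d} Σ_w (-μ[w] log μ[w])`. -/
noncomputable def entropy (μ : Measure (Cfg d A)) : ℝ :=
  ⨅ n : {n : ℕ // 1 ≤ n},
    ((n.1 : ℝ) ^ d)⁻¹ *
      ∑ w : (Fin d → Fin n.1) → A, Real.negMulLog (μ (cylE n.1 w)).toReal

/-- Pressure `p_φ(β) = sup { h(μ) + β ∫ φ dμ }` over shift-invariant probability measures. -/
noncomputable def pressure (φ : Cfg d A → ℝ) (β : ℝ) : ℝ :=
  sSup { r | ∃ μ : Measure (Cfg d A), IsProbabilityMeasure μ ∧ Invariant μ ∧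
    r = entropy μ + β * ∫ x, φ x ∂μ }

/-- The set of equilibrium states of `βφ`. -/
def ES (φ : Cfg d A → ℝ) (β : ℝ) : Set (Measure (Cfg d A)) :=
  { μ | IsProbabilityMeasure μ ∧ Invariant μ ∧
      entropy μ + β * ∫ x, φ x ∂μ = pressure φ β }

/-- `φ` has a freezing phase transition at `βc`. -/
def FreezingPT (φ : Cfg d A → ℝ) (βc : ℝ) : Prop :=
  (∀ β β' : ℝ, βc < β → βc < β' → ES φ β = ES φ β') ∧
  (∀ β β' : ℝ, β < βc → βc < β' → ES φ β ≠ ES φ β')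

/-- `s_φ = sup { ∫ φ dμ }` over shift-invariant probability measures. -/
noncomputable def sPhi (φ : Cfg d A → ℝ) : ℝ :=
  sSup { r | ∃ μ : Measure (Cfg d A), IsProbabilityMeasure μ ∧ Invariant μ ∧
    r = ∫ x, φ x ∂μ }

/-- The set of maximizing measures of `φ`. -/
def MM (φ : Cfg d A → ℝ) : Set (Measure (Cfg d A)) :=
  { μ | IsProbabilityMeasure μ ∧ Invariant μ ∧ (∫ x, φ x ∂μ) = sPhi φ }

/-- `h_φ = sup { h(η) : η ∈ MM(φ) }`. -/
noncomputable def hPhi (φ : Cfg d A → ℝ) : ℝ :=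
  sSup { r | ∃ μ ∈ MM φ, r = entropy μ }

/-- The zero-temperature accumulation points of `φ`. -/
def ZTA (φ : Cfg d A → ℝ) : Set (Measure (Cfg d A)) :=
  { μ | IsProbabilityMeasure μ ∧ Invariant μ ∧
      ∃ (β : ℕ → ℝ) (μs : ℕ → Measure (Cfg d A)),
        Tendsto β atTop atTop ∧ (∀ k, μs k ∈ ES φ (β k)) ∧
        ∀ f : Cfg d A → ℝ, Continuous f →
          Tendsto (fun k => ∫ x, f x ∂(μs k)) atTop (𝓝 (∫ x, f x ∂μ)) }

/-- A subshift: nonempty, closed, invariant under every shift. -/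
def IsSubshift (X₀ : Set (Cfg d A)) : Prop :=
  X₀.Nonempty ∧ IsClosed X₀ ∧ ∀ n : Fin d → ℤ, ∀ x ∈ X₀, shift n x ∈ X₀

/-- The language `L_{E_n}(X₀)`: patterns on `E_n` appearing at the origin of points of `X₀`. -/
def langE (X₀ : Set (Cfg d A)) (n : ℕ) : Set ((Fin d → Fin n) → A) :=
  { w | ∃ x ∈ X₀, ∀ m : Fin d → Fin n, x (fun i => ((m i : ℕ) : ℤ)) = w m }

/-- Topological entropy `h_top(X₀) = inf_{n ≥ 1} n^{-d} log |L_{E_n}(X₀)|`. -/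
noncomputable def topEnt (X₀ : Set (Cfg d A)) : ℝ :=
  ⨅ n : {n : ℕ // 1 ≤ n}, ((n.1 : ℝ) ^ d)⁻¹ * Real.log ((langE X₀ n.1).ncard)

/-- A measure of maximal entropy on the subshift `X₀`. -/
def IsMME (X₀ : Set (Cfg d A)) (μ : Measure (Cfg d A)) : Prop :=
  IsProbabilityMeasure μ ∧ Invariant μ ∧ μ X₀ = 1 ∧ entropy μ = topEnt X₀

/-- Ergodicity: invariant Borel sets have measure `0` or `1`. -/
def ErgodicInv (μ : Measure (Cfg d A)) : Prop :=
  ∀ s : Set (Cfg d A), MeasurableSet s → (∀ n : Fin d → ℤ, shift n ⁻¹' s = s) →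
    μ s = 0 ∨ μ s = 1

/-- The `n`-th variation `var_n φ`, over pairs agreeing on `B_n = ([-n,n] ∩ ℤ)^d`. -/
noncomputable def varPot (φ : Cfg d A → ℝ) (n : ℕ) : ℝ :=
  sSup { r | ∃ x y : Cfg d A,
    (∀ m : Fin d → ℤ, (∀ i, |m i| ≤ (n : ℤ)) → x m = y m) ∧ r = |φ x - φ y| }

/-- Sup-norm `‖m‖_∞` of a site `m ∈ ℤ^d`. -/
def supNorm (m : Fin d → ℤ) : ℕ := Finset.univ.sup fun i => (m i).natAbs

/-- The metric `dist(x,y) = 2^{-min{‖n‖_∞ : x_n ≠ y_n}}`. -/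
noncomputable def cfgDist (x y : Cfg d A) : ℝ :=
  if x = y then 0
  else (2 : ℝ) ^
    (-((sInf { k : ℕ | ∃ m : Fin d → ℤ, supNorm m = k ∧ x m ≠ y m } : ℕ) : ℤ))

/-- Distance from a point to a subshift. -/
noncomputable def distToSub (X₀ : Set (Cfg d A)) (x : Cfg d A) : ℝ :=
  sInf { r | ∃ y ∈ X₀, r = cfgDist x y }

end Defs

/-!
Torus partition functions are log-convex in `β` by Cauchy–Schwarz, and the proof consists in
improving this inequality. Let `x` and `y` be configurations that differ at finitely many sites.
Summable variation makes their relative energy `∑ₖ (φ (σᵏ x) - φ (σᵏ y))` convergent. If it is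
nonzero for one pair, tile the torus by boxes of a fixed size and exchange, in a single box, the
pattern of `x` for that of `y`. The resulting ratio of Boltzmann weights depends on `β`, uniformly
in the rest of the pattern, so each box gains a factor `θ < 1` over Cauchy–Schwarz. A gain that is
exponential in the volume survives in the limit: the pressure is strictly midpoint convex, and no
measure is an equilibrium state at two different values of `β`.

If all relative energies vanish, changing the sites of the torus one at a time to a constant
symbol shows that all patterns have the same energy up to `o(volume)`. Hence `∫ φ dμ` is the same
for all invariant `μ`, and `ES (β φ)` does not depend on `β`.
-/

/-! ### Entropy on finite sets -/

section GibbsMeasure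

variable {Ω : Type*} [MeasurableSpace Ω]

/-- The Gibbs measure on a finite set, whose weights are proportional to `exp ∘ g`. -/
noncomputable def gibbsMeasure (g : Ω → ℝ) : Measure Ω := Measure.count.tilted g

variable [MeasurableSingletonClass Ω]

instance [Finite Ω] [Nonempty Ω] (g : Ω → ℝ) : IsProbabilityMeasure (gibbsMeasure g) :=
  isProbabilityMeasure_tilted .of_finite

theorem gibbsMeasure_singleton [Fintype Ω] (g : Ω → ℝ) (ω : Ω) :
    gibbsMeasure g {ω} = ENNReal.ofReal (Real.exp (g ω) / ∑ ω, Real.exp (g ω)) := by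
  rw [gibbsMeasure, tilted_apply_eq_ofReal_integral, integral_singleton, integral_count]
  simp [measureReal_def]

theorem gibbsMeasure_map_equiv [Finite Ω] (g : Ω → ℝ) (e : Ω ≃ Ω) (hg : ∀ ω, g (e ω) = g ω) :
    (gibbsMeasure g).map e = gibbsMeasure g := by
  have := Fintype.ofFinite Ω
  refine Measure.ext_of_singleton fun ω => ?_
  rw [Measure.map_apply (measurable_of_finite _) (measurableSet_singleton _),
    show e ⁻¹' {ω} = {e.symm ω} by ext; simp [Equiv.eq_symm_apply], gibbsMeasure_singleton,
    gibbsMeasure_singleton, ← hg (e.symm ω), e.apply_symm_apply]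

end GibbsMeasure

section ShannonEntropy

variable {Ω : Type*} [Fintype Ω]

theorem log_exp_div_sum_exp (g : Ω → ℝ) (ω : Ω) :
    Real.log (Real.exp (g ω) / ∑ ω, Real.exp (g ω)) = g ω - Real.log (∑ ω, Real.exp (g ω)) := by
  have : 0 < ∑ ω, Real.exp (g ω) := Finset.sum_pos (fun _ _ => Real.exp_pos _) ⟨ω, by simp⟩
  rw [Real.log_div (Real.exp_ne_zero _) this.ne', Real.log_exp]

variable [MeasurableSpace Ω]

/-- The Shannon entropy of a measure on a finite set. -/
noncomputable def shannonEntropy (P : Measure Ω) : ℝ := ∑ ω, Real.negMulLog (P.real {ω})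

variable [MeasurableSingletonClass Ω]

theorem shannonEntropy_le_neg_integral_log (P : Measure Ω) [IsProbabilityMeasure P] {q : Ω → ℝ}
    (hq : ∀ ω, 0 ≤ q ω) (hq1 : ∑ ω, q ω ≤ 1) (hPq : ∀ ω, P.real {ω} ≠ 0 → 0 < q ω) :
    shannonEntropy P ≤ -∫ ω, Real.log (q ω) ∂P := by
  have hterm (ω : Ω) : Real.negMulLog (P.real {ω}) + P.real {ω} * Real.log (q ω)
      ≤ q ω - P.real {ω} := by
    obtain h0 | h0 := eq_or_ne (P.real {ω}) 0
    · simpa [h0] using hq ω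
    · have hp : 0 < P.real {ω} := measureReal_nonneg.lt_of_ne' h0
      calc Real.negMulLog (P.real {ω}) + P.real {ω} * Real.log (q ω)
          = P.real {ω} * Real.log (q ω / P.real {ω}) := by
            rw [Real.log_div (hPq ω h0).ne' h0, Real.negMulLog]; ring
        _ ≤ P.real {ω} * (q ω / P.real {ω} - 1) := by
            gcongr; exact Real.log_le_sub_one_of_pos (div_pos (hPq ω h0) hp)
        _ = q ω - P.real {ω} := by field_simp
  have hP1 : ∑ ω, P.real {ω} = 1 := by simp [sum_measureReal_singleton]
  have hsum := Finset.sum_le_sum fun ω (_ : ω ∈ Finset.univ) => hterm ω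
  simp only [Finset.sum_add_distrib, Finset.sum_sub_distrib, hP1] at hsum
  rw [integral_fintype .of_finite, shannonEntropy]
  simp only [smul_eq_mul]
  linarith

theorem shannonEntropy_add_integral_le (P : Measure Ω) [IsProbabilityMeasure P] (g : Ω → ℝ) :
    shannonEntropy P + ∫ ω, g ω ∂P ≤ Real.log (∑ ω, Real.exp (g ω)) := by
  have := P.nonempty_of_neZero
  have hZ : 0 < ∑ ω, Real.exp (g ω) :=
    Finset.sum_pos (fun _ _ => Real.exp_pos _) Finset.univ_nonempty
  have h := shannonEntropy_le_neg_integral_log P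
    (q := fun ω => Real.exp (g ω) / ∑ ω, Real.exp (g ω))
    (fun ω => by positivity) (by rw [← Finset.sum_div, div_self hZ.ne']) fun ω _ => by positivity
  simp only [log_exp_div_sum_exp, integral_sub .of_finite .of_finite, integral_const, probReal_univ,
    one_smul] at h
  linarith

theorem gibbsMeasure_real_singleton (g : Ω → ℝ) (ω : Ω) :
    (gibbsMeasure g).real {ω} = Real.exp (g ω) / ∑ ω, Real.exp (g ω) := by
  rw [measureReal_def, gibbsMeasure_singleton, ENNReal.toReal_ofReal (by positivity)]

theorem shannonEntropy_gibbsMeasure_add_integral [Nonempty Ω] (g : Ω → ℝ) :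
    shannonEntropy (gibbsMeasure g) + ∫ ω, g ω ∂(gibbsMeasure g)
      = Real.log (∑ ω, Real.exp (g ω)) := by
  rw [shannonEntropy, integral_fintype .of_finite, ← Finset.sum_add_distrib]
  calc ∑ ω, (Real.negMulLog ((gibbsMeasure g).real {ω}) + (gibbsMeasure g).real {ω} • g ω)
      = ∑ ω, (gibbsMeasure g).real {ω} * Real.log (∑ ω, Real.exp (g ω)) := by
        refine Finset.sum_congr rfl fun ω _ => ?_
        rw [gibbsMeasure_real_singleton, Real.negMulLog, log_exp_div_sum_exp, smul_eq_mul]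
        ring
    _ = Real.log (∑ ω, Real.exp (g ω)) := by
        simp [← Finset.sum_mul, sum_measureReal_singleton]

theorem shannonEntropy_le_sum_map {ι S : Type*} [Fintype ι] [Fintype S]
    [MeasurableSpace S] [MeasurableSingletonClass S] (P : Measure Ω) [IsProbabilityMeasure P]
    (X : ι → Ω → S) (hX : Function.Injective fun ω i => X i ω) :
    shannonEntropy P ≤ ∑ i, shannonEntropy (P.map (X i)) := by
  have (i : ι) : IsProbabilityMeasure (P.map (X i)) :=
    Measure.isProbabilityMeasure_map (measurable_of_finite _).aemeasurable
  have hpos (ω : Ω) (hω : P.real {ω} ≠ 0) (i : ι) : 0 < (P.map (X i)).real {X i ω} := by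
    rw [map_measureReal_apply (measurable_of_finite _) (measurableSet_singleton _)]
    exact (measureReal_nonneg.lt_of_ne' hω).trans_le (measureReal_mono (by simp))
  have hprod : ∑ ω, ∏ i, (P.map (X i)).real {X i ω} ≤ 1 := by
    calc ∑ ω, ∏ i, (P.map (X i)).real {X i ω}
        ≤ ∑ x : ι → S, ∏ i, (P.map (X i)).real {x i} := by
          rw [← Finset.sum_image (g := fun ω i => X i ω)
            (f := fun x : ι → S => ∏ i, (P.map (X i)).real {x i}) hX.injOn]
          exact Finset.sum_le_univ_sum_of_nonneg fun _ =>
            Finset.prod_nonneg fun _ _ => measureReal_nonneg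
      _ = 1 := by
          rw [← Fintype.prod_sum fun i s => (P.map (X i)).real {s}]
          simp [sum_measureReal_singleton]
  refine (shannonEntropy_le_neg_integral_log P
    (fun _ => Finset.prod_nonneg fun _ _ => measureReal_nonneg) hprod
    fun ω hω => Finset.prod_pos fun i _ => hpos ω hω i).trans_eq ?_
  have hlog : ∫ ω, Real.log (∏ i, (P.map (X i)).real {X i ω}) ∂P
      = ∫ ω, ∑ i, Real.log ((P.map (X i)).real {X i ω}) ∂P := by
    rw [integral_fintype .of_finite, integral_fintype .of_finite]
    refine Finset.sum_congr rfl fun ω _ => ?_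
    obtain h0 | h0 := eq_or_ne (P.real {ω}) 0
    · simp [h0]
    · rw [Real.log_prod fun i _ => (hpos ω h0 i).ne']
  rw [hlog, integral_finsetSum _ fun _ _ => .of_finite, ← Finset.sum_neg_distrib]
  refine Finset.sum_congr rfl fun i _ => ?_
  rw [← integral_map (φ := X i) (f := fun s => Real.log ((P.map (X i)).real {s}))
    (measurable_of_finite _).aemeasurable (measurable_of_finite _).aestronglyMeasurable,
    integral_fintype .of_finite, ← Finset.sum_neg_distrib]
  simp [shannonEntropy, Real.negMulLog]

end ShannonEntropy

/-! ### An improved Cauchy–Schwarz inequality -/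

section CauchySchwarz

theorem sq_sum_mul_le_of_cross_ratio {P : Type*} [Fintype P] {x y : P → ℝ} {K r : ℝ} {u v : P}
    (hx : ∀ p, 0 ≤ x p) (hy : ∀ p, 0 ≤ y p) (hK : 0 < K) (hr1 : r ≤ 1)
    (hxK : ∑ p, x p ^ 2 ≤ K * x v ^ 2) (hyK : ∑ p, y p ^ 2 ≤ K * y u ^ 2)
    (hxy : x u * y v ≤ r * (x v * y u)) :
    (∑ p, x p * y p) ^ 2 ≤ (1 - ((1 - r) / K) ^ 2 / 2) * ((∑ p, x p ^ 2) * ∑ p, y p ^ 2) := by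
  have lagrange : 2 * ((∑ p, x p ^ 2) * (∑ p, y p ^ 2) - (∑ p, x p * y p) ^ 2)
      = ∑ p, ∑ q, (x p * y q - x q * y p) ^ 2 := by
    have hexp : ∀ p q, (x p * y q - x q * y p) ^ 2
        = x p ^ 2 * y q ^ 2 + y p ^ 2 * x q ^ 2 - 2 * ((x p * y p) * (x q * y q)) :=
      fun p q => by ring
    simp only [hexp, Finset.sum_sub_distrib, Finset.sum_add_distrib, ← Finset.mul_sum,
      ← Finset.sum_mul]
    ring
  have hterm : (x v * y u - x u * y v) ^ 2 ≤ ∑ p, ∑ q, (x p * y q - x q * y p) ^ 2 :=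
    (Finset.single_le_sum (f := fun q => (x v * y q - x q * y v) ^ 2)
      (fun _ _ => sq_nonneg _) (Finset.mem_univ u)).trans
    (Finset.single_le_sum (f := fun p => ∑ q, (x p * y q - x q * y p) ^ 2)
      (fun _ _ => Finset.sum_nonneg fun _ _ => sq_nonneg _) (Finset.mem_univ v))
  have hgap : ((1 - r) * (x v * y u)) ^ 2 ≤ (x v * y u - x u * y v) ^ 2 := by
    have := mul_nonneg (hx v) (hy u)
    exact pow_le_pow_left₀ (mul_nonneg (by linarith) this) (by linarith) 2
  have hprod : ((1 - r) / K) ^ 2 * ((∑ p, x p ^ 2) * ∑ p, y p ^ 2)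
      ≤ ((1 - r) * (x v * y u)) ^ 2 := by
    calc ((1 - r) / K) ^ 2 * ((∑ p, x p ^ 2) * ∑ p, y p ^ 2)
        ≤ ((1 - r) / K) ^ 2 * ((K * x v ^ 2) * (K * y u ^ 2)) := by
          gcongr
      _ = ((1 - r) * (x v * y u)) ^ 2 := by field_simp
  linarith

theorem sq_sum_le_of_cross_ratio {P : Type*} [Fintype P] {a b c : P → ℝ} {K r : ℝ} {u v : P}
    (ha : ∀ p, 0 ≤ a p) (hb : ∀ p, 0 ≤ b p) (hc : ∀ p, 0 ≤ c p) (habc : ∀ p, c p ^ 2 ≤ a p * b p)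
    (hK : 0 < K) (hr : 0 ≤ r) (hr1 : r ≤ 1) (haK : ∑ p, a p ≤ K * a v) (hbK : ∑ p, b p ≤ K * b u)
    (hab : a u * b v ≤ r ^ 2 * (a v * b u)) :
    (∑ p, c p) ^ 2 ≤ (1 - ((1 - r) / K) ^ 2 / 2) * ((∑ p, a p) * ∑ p, b p) := by
  have hsqa (p : P) : √(a p) ^ 2 = a p := Real.sq_sqrt (ha p)
  have hsqb (p : P) : √(b p) ^ 2 = b p := Real.sq_sqrt (hb p)
  have hle (p : P) : c p ≤ √(a p) * √(b p) := by
    rw [← Real.sqrt_mul (ha p)]; exact Real.le_sqrt_of_sq_le (habc p)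
  have hcross : √(a u) * √(b v) ≤ r * (√(a v) * √(b u)) := by
    rw [← Real.sqrt_mul (ha u), ← Real.sqrt_mul (ha v)]
    refine Real.sqrt_le_iff.2 ⟨by positivity, ?_⟩
    rwa [mul_pow, Real.sq_sqrt (mul_nonneg (ha v) (hb u))]
  have h := sq_sum_mul_le_of_cross_ratio (x := fun p => √(a p)) (y := fun p => √(b p))
    (fun _ => Real.sqrt_nonneg _) (fun _ => Real.sqrt_nonneg _) hK hr1
    (by simpa only [hsqa] using haK) (by simpa only [hsqb] using hbK) hcross
  simp only [hsqa, hsqb] at h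
  exact (pow_le_pow_left₀ (Finset.sum_nonneg fun p _ => hc p)
    (Finset.sum_le_sum fun p _ => hle p) 2).trans h

/-- Replacing a coordinate equal to `q` by `p` increases the weight `f` by at most a factor `c`. -/
def RatioBound {ι P : Type*} [DecidableEq ι] (f : (ι → P) → ℝ) (p q : P) (c : ℝ) : Prop :=
  ∀ i z, f (Function.update z i p) ≤ c * f (Function.update z i q)

namespace RatioBound

variable {P : Type*} {n : ℕ} {p q : P} {c : ℝ}

theorem const_mul {ι : Type*} [DecidableEq ι] {f : (ι → P) → ℝ} (h : RatioBound f p q c) {k : ℝ}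
    (hk : 0 ≤ k) : RatioBound (fun z => k * f z) p q c := fun i z => by
  rw [mul_left_comm]; exact mul_le_mul_of_nonneg_left (h i z) hk

theorem comp_equiv {ι κ : Type*} [DecidableEq ι] [DecidableEq κ] {f : (ι → P) → ℝ}
    (h : RatioBound f p q c) (e : ι ≃ κ) : RatioBound (fun z : κ → P => f (z ∘ e)) p q c :=
  fun i z => by simpa [Function.update_comp_equiv] using h (e.symm i) (z ∘ e)

theorem sum_cons [Fintype P] {f : (Fin (n + 1) → P) → ℝ} (h : RatioBound f p q c) :
    RatioBound (fun z : Fin n → P => ∑ a, f (Fin.cons a z)) p q c := fun i z => by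
  simp only [Fin.cons_update, Finset.mul_sum]
  exact Finset.sum_le_sum fun a _ => h i.succ (Fin.cons a z)

theorem cons {f : (Fin (n + 1) → P) → ℝ} (h : RatioBound f p q c) (z : Fin n → P) :
    f (Fin.cons p z) ≤ c * f (Fin.cons q z) := by
  simpa using h 0 (Fin.cons p z)

end RatioBound

theorem sum_fin_succ_pi {P : Type*} [Fintype P] {n : ℕ} (f : (Fin (n + 1) → P) → ℝ) :
    ∑ z, f z = ∑ z : Fin n → P, ∑ a, f (Fin.cons a z) := by
  rw [Finset.sum_comm, ← Fintype.sum_prod_type']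
  exact ((Fin.consEquiv fun _ => P).sum_comp f).symm

/-- The factor gained over Cauchy–Schwarz from one coordinate with `k` values, when all weight
ratios are at most `c` and the cross ratio of two of the values is at most `r ^ 2`. -/
noncomputable def gainFactor (k : ℕ) (c r : ℝ) : ℝ := 1 - ((1 - r) / (k * c)) ^ 2 / 2

theorem gainFactor_pos {k : ℕ} {c r : ℝ} (hk : 0 < k) (hc : 1 ≤ c) (hr : 0 ≤ r) (hr1 : r ≤ 1) :
    0 < gainFactor k c r := by
  have hkc : (1 : ℝ) ≤ k * c := one_le_mul_of_one_le_of_one_le (mod_cast hk) hc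
  have h : (1 - r) / (k * c) ≤ 1 := (div_le_one (by positivity)).2 (by linarith)
  have := pow_le_one₀ (n := 2) (div_nonneg (by linarith) (by positivity)) h
  rw [gainFactor]
  linarith

theorem gainFactor_lt_one {k : ℕ} {c r : ℝ} (hk : 0 < k) (hc : 0 < c) (hr : r < 1) :
    gainFactor k c r < 1 := by
  have : 0 < (1 - r) / (k * c) := div_pos (by linarith) (by positivity)
  rw [gainFactor]
  have := pow_pos this 2
  linarith

theorem sq_sum_le_gainFactor_pow_fin {P : Type*} [Fintype P] {u v : P} {c r r₁ r₃ : ℝ}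
    (hc : 1 ≤ c) (hr : 0 ≤ r) (hr1 : r ≤ 1) (hr₁₃ : r₁ * r₃ ≤ r ^ 2) (n : ℕ)
    {f₁ f₂ f₃ : (Fin n → P) → ℝ} (h₁ : ∀ z, 0 ≤ f₁ z) (h₂ : ∀ z, 0 ≤ f₂ z) (h₃ : ∀ z, 0 ≤ f₃ z)
    (hf : ∀ z, f₂ z ^ 2 ≤ f₁ z * f₃ z)
    (hc₁ : ∀ p q, RatioBound f₁ p q c) (hc₃ : ∀ p q, RatioBound f₃ p q c)
    (hu : RatioBound f₁ u v r₁) (hv : RatioBound f₃ v u r₃) :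
    (∑ z, f₂ z) ^ 2 ≤ gainFactor (Fintype.card P) c r ^ n * ((∑ z, f₁ z) * ∑ z, f₃ z) := by
  set θ := gainFactor (Fintype.card P) c r
  have hcard : 0 < Fintype.card P := Fintype.card_pos_iff.2 ⟨u⟩
  have hθ : 0 ≤ θ := (gainFactor_pos hcard hc hr hr1).le
  induction n with
  | zero => simpa using hf default
  | succ n ih =>
    rw [sum_fin_succ_pi f₁, sum_fin_succ_pi f₂, sum_fin_succ_pi f₃]
    have hsum {f : (Fin (n + 1) → P) → ℝ} (w : P) (hfc : ∀ p q, RatioBound f p q c)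
        (z : Fin n → P) : ∑ a, f (Fin.cons a z) ≤ (Fintype.card P * c) * f (Fin.cons w z) := by
      rw [mul_assoc, ← nsmul_eq_mul]
      exact Finset.sum_le_card_nsmul _ _ _ fun a _ => (hfc a w).cons z
    have hgain (z : Fin n → P) : (∑ a, f₂ (Fin.cons a z)) ^ 2
        ≤ (θ * ∑ a, f₁ (Fin.cons a z)) * ∑ a, f₃ (Fin.cons a z) := by
      rw [mul_assoc]
      refine sq_sum_le_of_cross_ratio (fun _ => h₁ _) (fun _ => h₃ _) (fun _ => h₂ _)
        (fun _ => hf _) (by positivity) hr hr1 (hsum v hc₁ z) (hsum u hc₃ z) ?_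
      calc f₁ (Fin.cons u z) * f₃ (Fin.cons v z)
          ≤ (r₁ * f₁ (Fin.cons v z)) * (r₃ * f₃ (Fin.cons u z)) :=
            mul_le_mul (hu.cons z) (hv.cons z) (h₃ _) ((h₁ _).trans (hu.cons z))
        _ = (r₁ * r₃) * (f₁ (Fin.cons v z) * f₃ (Fin.cons u z)) := by ring
        _ ≤ r ^ 2 * (f₁ (Fin.cons v z) * f₃ (Fin.cons u z)) :=
            mul_le_mul_of_nonneg_right hr₁₃ (mul_nonneg (h₁ _) (h₃ _))
    refine (ih (fun z => mul_nonneg hθ (Finset.sum_nonneg fun _ _ => h₁ _))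
      (fun z => Finset.sum_nonneg fun _ _ => h₂ _) (fun z => Finset.sum_nonneg fun _ _ => h₃ _)
      hgain (fun p q => (hc₁ p q).sum_cons.const_mul hθ) (fun p q => (hc₃ p q).sum_cons)
      (hu.sum_cons.const_mul hθ) hv.sum_cons).trans_eq ?_
    rw [← Finset.mul_sum]
    ring

theorem sq_sum_le_gainFactor_pow {ι P : Type*} [Fintype ι] [DecidableEq ι] [Fintype P] {u v : P}
    {c r r₁ r₃ : ℝ} (hc : 1 ≤ c) (hr : 0 ≤ r) (hr1 : r ≤ 1)
    (hr₁₃ : r₁ * r₃ ≤ r ^ 2) {f₁ f₂ f₃ : (ι → P) → ℝ} (h₁ : ∀ z, 0 ≤ f₁ z) (h₂ : ∀ z, 0 ≤ f₂ z)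
    (h₃ : ∀ z, 0 ≤ f₃ z) (hf : ∀ z, f₂ z ^ 2 ≤ f₁ z * f₃ z)
    (hc₁ : ∀ p q, RatioBound f₁ p q c) (hc₃ : ∀ p q, RatioBound f₃ p q c)
    (hu : RatioBound f₁ u v r₁) (hv : RatioBound f₃ v u r₃) :
    (∑ z, f₂ z) ^ 2
      ≤ gainFactor (Fintype.card P) c r ^ Fintype.card ι * ((∑ z, f₁ z) * ∑ z, f₃ z) := by
  let e := Fintype.equivFin ι
  have hsum (f : (ι → P) → ℝ) : ∑ z : Fin (Fintype.card ι) → P, f (z ∘ e) = ∑ z, f z :=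
    (e.symm.arrowCongr (Equiv.refl P)).sum_comp f
  simpa only [hsum] using sq_sum_le_gainFactor_pow_fin hc hr hr1 hr₁₃ (Fintype.card ι)
    (f₁ := fun z => f₁ (z ∘ e)) (f₂ := fun z => f₂ (z ∘ e)) (f₃ := fun z => f₃ (z ∘ e))
    (fun _ => h₁ _) (fun _ => h₂ _) (fun _ => h₃ _) (fun _ => hf _)
    (fun p q => (hc₁ p q).comp_equiv e) (fun p q => (hc₃ p q).comp_equiv e)
    (hu.comp_equiv e) (hv.comp_equiv e)

end CauchySchwarz

/-! ### Oscillations and summable variation -/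

section SupNorm

variable {d : ℕ}

theorem supNorm_le_iff {k : Fin d → ℤ} {n : ℕ} : supNorm k ≤ n ↔ ∀ i, (k i).natAbs ≤ n := by
  simp [supNorm]

theorem natAbs_le_supNorm (k : Fin d → ℤ) (i : Fin d) : (k i).natAbs ≤ supNorm k :=
  supNorm_le_iff.1 le_rfl i

theorem supNorm_neg (k : Fin d → ℤ) : supNorm (-k) = supNorm k := by
  simp [supNorm]

theorem supNorm_add_le (k l : Fin d → ℤ) : supNorm (k + l) ≤ supNorm k + supNorm l :=
  supNorm_le_iff.2 fun i => (Int.natAbs_add_le _ _).trans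
    (add_le_add (natAbs_le_supNorm k i) (natAbs_le_supNorm l i))

theorem supNorm_eq_zero_iff {k : Fin d → ℤ} : supNorm k = 0 ↔ k = 0 := by
  rw [← Nat.le_zero, supNorm_le_iff]
  simp [funext_iff]

theorem supNorm_le_iff_mem_Icc {k : Fin d → ℤ} {n : ℕ} :
    supNorm k ≤ n ↔ k ∈ Finset.Icc (fun _ => -(n : ℤ)) (fun _ => (n : ℤ)) := by
  rw [supNorm_le_iff, Finset.mem_Icc, Pi.le_def, Pi.le_def, ← forall_and]
  exact forall_congr' fun i => by omega

theorem card_Icc_neg_const (n : ℕ) :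
    (Finset.Icc (fun _ : Fin d => -(n : ℤ)) (fun _ => (n : ℤ))).card = (2 * n + 1) ^ d := by
  rw [Pi.card_Icc]
  simp only [Int.card_Icc, Finset.prod_const, Finset.card_univ, Fintype.card_fin]
  congr 1
  omega

theorem card_filter_supNorm_eq_succ_le (s : Finset (Fin d → ℤ)) (n : ℕ) :
    ((s.filter fun k => supNorm k = n + 1).card : ℝ) ≤ 2 * d * (2 * n + 3) ^ (d - 1) := by
  let ball (m : ℕ) := Finset.Icc (fun _ : Fin d => -(m : ℤ)) (fun _ => (m : ℤ))
  have hshell : (s.filter fun k => supNorm k = n + 1) ⊆ ball (n + 1) \ ball n := fun k hk => by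
    have := (Finset.mem_filter.1 hk).2
    rw [Finset.mem_sdiff, ← supNorm_le_iff_mem_Icc, ← supNorm_le_iff_mem_Icc]
    omega
  have hball : ball n ⊆ ball (n + 1) := fun k hk =>
    supNorm_le_iff_mem_Icc.1 ((supNorm_le_iff_mem_Icc.2 hk).trans n.le_succ)
  have hcard := Finset.card_le_card hshell
  rw [Finset.card_sdiff_of_subset hball, card_Icc_neg_const, card_Icc_neg_const] at hcard
  calc ((s.filter fun k => supNorm k = n + 1).card : ℝ)
      ≤ (2 * n + 3 : ℝ) ^ d - (2 * n + 1 : ℝ) ^ d := by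
        rw [← Nat.cast_le (α := ℝ), Nat.cast_sub (by gcongr; omega)] at hcard
        push_cast at hcard
        rwa [show (2 * (n + 1) + 1 : ℝ) = 2 * n + 3 by ring] at hcard
    _ ≤ |(2 * n + 3 : ℝ) - (2 * n + 1)| * d * max |(2 * n + 3 : ℝ)| |(2 * n + 1 : ℝ)| ^ (d - 1) :=
        (le_abs_self _).trans (abs_pow_sub_pow_le _ _ _)
    _ = 2 * d * (2 * n + 3) ^ (d - 1) := by
        rw [abs_of_nonneg (by positivity : (0 : ℝ) ≤ 2 * n + 1),
          abs_of_nonneg (by positivity : (0 : ℝ) ≤ 2 * n + 3), max_eq_left (by linarith),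
          add_sub_add_left_eq_sub]
        norm_num

theorem card_filter_supNorm_eq_le (s : Finset (Fin d → ℤ)) (n : ℕ) :
    ((s.filter fun k => supNorm k = n).card : ℝ) ≤ (2 * d + 1) * (2 * n + 1) ^ (d - 1) := by
  cases n with
  | zero =>
    have hle : (s.filter fun k => supNorm k = 0).card ≤ 1 :=
      Finset.card_le_one.2 fun k hk l hl => by
        rw [supNorm_eq_zero_iff.1 (Finset.mem_filter.1 hk).2,
          supNorm_eq_zero_iff.1 (Finset.mem_filter.1 hl).2]
    have : ((s.filter fun k => supNorm k = 0).card : ℝ) ≤ 1 := mod_cast hle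
    simpa using this.trans (by linarith [d.cast_nonneg (α := ℝ)])
  | succ n =>
    refine (card_filter_supNorm_eq_succ_le s n).trans ?_
    rw [show (2 * (n + 1 : ℕ) + 1 : ℝ) = 2 * n + 3 by push_cast; ring]
    gcongr
    linarith

end SupNorm

section Oscillation

variable {d : ℕ} {A : Type}

/-- The oscillation of `φ` over pairs of configurations agreeing on `{m | supNorm m < n}`. It is
`varPot φ (n - 1)` for `n ≥ 1`, and the oscillation over all pairs for `n = 0`. -/
noncomputable def osc (φ : Cfg d A → ℝ) (n : ℕ) : ℝ :=
  sSup {r | ∃ x y : Cfg d A, (∀ m, supNorm m < n → x m = y m) ∧ r = |φ x - φ y|}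

theorem osc_nonneg (φ : Cfg d A → ℝ) (n : ℕ) : 0 ≤ osc φ n := by
  refine Real.sSup_nonneg ?_
  rintro r ⟨x, y, -, rfl⟩
  exact abs_nonneg _

theorem osc_succ (φ : Cfg d A → ℝ) (n : ℕ) : osc φ (n + 1) = varPot φ n := by
  have hball (m : Fin d → ℤ) : supNorm m < n + 1 ↔ ∀ i, |m i| ≤ (n : ℤ) := by
    rw [Nat.lt_succ_iff, supNorm_le_iff]
    exact forall_congr' fun i => by rw [abs_le]; omega
  simp only [osc, varPot, hball]

/-- `φ` has summable variation: `∑ n ≥ 1, n ^ (d - 1) * varPot φ n < ∞`. -/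
def SummableVariation (φ : Cfg d A → ℝ) : Prop :=
  Summable fun n : ℕ => ((n + 1 : ℕ) : ℝ) ^ (d - 1) * varPot φ (n + 1)

theorem SummableVariation.tendsto_osc {φ : Cfg d A → ℝ} (hs : SummableVariation φ) :
    Tendsto (osc φ) atTop (𝓝 0) := by
  rw [← tendsto_add_atTop_iff_nat 2]
  refine squeeze_zero (fun n => osc_nonneg φ _) (fun n => ?_) hs.tendsto_atTop_zero
  rw [← osc_succ]
  exact le_mul_of_one_le_left (osc_nonneg φ _) (one_le_pow₀ (by simp))

theorem SummableVariation.summable_osc_nat {φ : Cfg d A → ℝ} (hs : SummableVariation φ) (R : ℕ) :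
    Summable fun n : ℕ => ((2 * d + 1) * (2 * n + 1) ^ (d - 1) : ℝ) * osc φ (n - R) := by
  rw [← summable_nat_add_iff (R + 2)]
  refine .of_nonneg_of_le (fun n => mul_nonneg (by positivity) (osc_nonneg φ _)) (fun n => ?_)
    (hs.mul_left ((2 * d + 1) * (2 * R + 5) ^ (d - 1) : ℝ))
  rw [show n + (R + 2) - R = n + 1 + 1 by omega, ← osc_succ, ← mul_assoc,
    mul_assoc (2 * (d : ℝ) + 1) ((2 * (R : ℝ) + 5) ^ _), ← mul_pow]
  gcongr
  · exact osc_nonneg φ _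
  · push_cast
    nlinarith [n.cast_nonneg (α := ℝ), R.cast_nonneg (α := ℝ)]

theorem SummableVariation.summable_osc {φ : Cfg d A → ℝ} (hs : SummableVariation φ) (R : ℕ) :
    Summable fun k : Fin d → ℤ => osc φ (supNorm k - R) := by
  refine summable_of_sum_le (fun k => osc_nonneg φ _)
    (c := ∑' n : ℕ, ((2 * d + 1) * (2 * n + 1) ^ (d - 1) : ℝ) * osc φ (n - R)) fun s => ?_
  rw [Finset.sum_comp (fun n => osc φ (n - R)) supNorm]
  refine (Finset.sum_le_sum fun n _ => ?_).trans ((hs.summable_osc_nat R).sum_le_tsum _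
    fun n _ => mul_nonneg (by positivity) (osc_nonneg φ _))
  rw [nsmul_eq_mul]
  exact mul_le_mul_of_nonneg_right (card_filter_supNorm_eq_le s n) (osc_nonneg φ _)

variable [TopologicalSpace A] [CompactSpace A] {φ : Cfg d A → ℝ}

theorem exists_forall_abs_le (hφ : Continuous φ) : ∃ C, ∀ x, |φ x| ≤ C := by
  obtain ⟨C, hC⟩ := (isCompact_range hφ).isBounded.exists_norm_le
  exact ⟨C, fun x => hC _ ⟨x, rfl⟩⟩

theorem abs_sub_le_osc (hφ : Continuous φ) {n : ℕ} {x y : Cfg d A}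
    (h : ∀ m, supNorm m < n → x m = y m) : |φ x - φ y| ≤ osc φ n := by
  obtain ⟨C, hC⟩ := exists_forall_abs_le hφ
  refine le_csSup ⟨C + C, ?_⟩ ⟨x, y, h, rfl⟩
  rintro r ⟨x, y, -, rfl⟩
  exact (abs_sub _ _).trans (add_le_add (hC x) (hC y))

end Oscillation

/-! ### Periodic configurations -/

section Torus

variable {d : ℕ} {A : Type} {N : ℕ}

/-- The discrete torus `(ℤ / N) ^ d`. -/
abbrev Torus (d N : ℕ) : Type := Fin d → ZMod N

/-- Reduction modulo `N` of the sites of `ℤ ^ d`. -/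
def toTorus (N : ℕ) : (Fin d → ℤ) →+ Torus d N := (Int.castAddHom (ZMod N)).compLeft (Fin d)

/-- The `N`-periodic configuration with fundamental pattern `w`. -/
def periodize (N : ℕ) (w : Torus d N → A) : Cfg d A := w ∘ toTorus N

/-- The action of the torus on its patterns by translation. -/
def translate (t : Torus d N) : (Torus d N → A) ≃ (Torus d N → A) :=
  (Equiv.addLeft (-t)).arrowCongr (Equiv.refl A)

/-- The representative in `ℤ ^ d` of a site of the torus whose coordinates are closest to `0`. -/
def centered (t : Torus d N) : Fin d → ℤ := fun i => (t i).valMinAbs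

theorem translate_apply (t s : Torus d N) (w : Torus d N → A) : translate t w s = w (t + s) := by
  simp [translate, Equiv.arrowCongr_apply]

theorem shift_periodize (k : Fin d → ℤ) (w : Torus d N → A) :
    shift k (periodize N w) = periodize N (translate (toTorus N k) w) := by
  funext m
  simp [shift, periodize, translate_apply]

theorem translate_translate (s t : Torus d N) (w : Torus d N → A) :
    translate s (translate t w) = translate (t + s) w := by
  funext r
  simp [translate_apply, add_assoc]

theorem toTorus_centered (t : Torus d N) : toTorus N (centered t) = t :=
  funext fun i => ZMod.coe_valMinAbs (t i)

theorem centered_injective : Function.Injective (centered : Torus d N → Fin d → ℤ) :=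
  Function.LeftInverse.injective toTorus_centered

variable [NeZero N]

theorem supNorm_centered_toTorus_le (k : Fin d → ℤ) :
    supNorm (centered (toTorus N k)) ≤ supNorm k :=
  supNorm_le_iff.2 fun i => (ZMod.natAbs_min_of_le_div_two N _ (k i) (ZMod.coe_valMinAbs _)
    (ZMod.natAbs_valMinAbs_le _)).trans (natAbs_le_supNorm k i)

theorem centered_toTorus {k : Fin d → ℤ} (hk : 2 * supNorm k < N) : centered (toTorus N k) = k :=
  funext fun i => (ZMod.valMinAbs_spec _ _).2 ⟨rfl, by
    have := natAbs_le_supNorm k i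
    rw [Set.mem_Ioc]
    omega⟩

theorem supNorm_centered_le_add (t : Torus d N) (m : Fin d → ℤ) :
    supNorm (centered t) ≤ supNorm (centered (t + toTorus N m)) + supNorm m := by
  calc supNorm (centered t)
      = supNorm (centered (toTorus N (centered (t + toTorus N m) + -m))) := by
        rw [map_add, toTorus_centered, map_neg, add_neg_cancel_right]
    _ ≤ supNorm (centered (t + toTorus N m) + -m) := supNorm_centered_toTorus_le _
    _ ≤ supNorm (centered (t + toTorus N m)) + supNorm m := by
        simpa only [supNorm_neg] using supNorm_add_le (centered (t + toTorus N m)) (-m)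

/-- The energy of a pattern on the torus, summed over all its translates. -/
noncomputable def hamiltonian (φ : Cfg d A → ℝ) (N : ℕ) [NeZero N] (w : Torus d N → A) : ℝ :=
  ∑ t : Torus d N, φ (periodize N (translate t w))

theorem hamiltonian_translate (φ : Cfg d A → ℝ) (t : Torus d N) (w : Torus d N → A) :
    hamiltonian φ N (translate t w) = hamiltonian φ N w := by
  simp only [hamiltonian, translate_translate]
  exact Equiv.sum_comp (Equiv.addLeft t) fun s => φ (periodize N (translate s w))

theorem hamiltonian_eq_sum_shift {ι : Type*} [Fintype ι] (φ : Cfg d A → ℝ) {k : ι → Fin d → ℤ}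
    (hk : Function.Bijective fun i => toTorus N (k i)) (w : Torus d N → A) :
    hamiltonian φ N w = ∑ i, φ (shift (k i) (periodize N w)) := by
  simp only [shift_periodize]
  exact (hk.sum_comp fun t => φ (periodize N (translate t w))).symm

end Torus

/-! ### Relative energies -/

section RelativeEnergy

variable {d : ℕ} {A : Type} {N R : ℕ}

/-- Two configurations agree at all sites outside the ball of radius `R`. -/
def AgreeOutside (R : ℕ) (x y : Cfg d A) : Prop := ∀ m, R < supNorm m → x m = y m

/-- Two patterns on the torus agree at all sites outside the ball of radius `R`. -/
def TorusAgreeOutside (R : ℕ) (v w : Torus d N → A) : Prop :=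
  ∀ t, R < supNorm (centered t) → v t = w t

/-- The energy difference of two configurations, which converges when they agree outside a
finite set of sites. -/
noncomputable def relativeEnergy (φ : Cfg d A → ℝ) (x y : Cfg d A) : ℝ :=
  ∑' k : Fin d → ℤ, (φ (shift k x) - φ (shift k y))

theorem AgreeOutside.symm {x y : Cfg d A} (h : AgreeOutside R x y) : AgreeOutside R y x :=
  fun m hm => (h m hm).symm

theorem relativeEnergy_symm (φ : Cfg d A → ℝ) (x y : Cfg d A) :
    relativeEnergy φ y x = -relativeEnergy φ x y := by
  simp [relativeEnergy, ← tsum_neg]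

/-- The accuracy to which the patterns on the ball of radius `L` determine the relative energy of
two configurations agreeing outside the ball of radius `R`. -/
noncomputable def truncationError (φ : Cfg d A → ℝ) (R L : ℕ) : ℝ :=
  ∑' k : Fin d → ℤ, min (2 * osc φ (L + 1 - supNorm k)) (2 * osc φ (supNorm k - R))

theorem summable_truncationError {φ : Cfg d A → ℝ} (hs : SummableVariation φ) (R L : ℕ) :
    Summable fun k : Fin d → ℤ =>
      min (2 * osc φ (L + 1 - supNorm k)) (2 * osc φ (supNorm k - R)) :=
  have hnonneg (n : ℕ) : 0 ≤ 2 * osc φ n := mul_nonneg two_pos.le (osc_nonneg φ n)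
  .of_nonneg_of_le (fun _ => le_min (hnonneg _) (hnonneg _)) (fun _ => min_le_right _ _)
    ((hs.summable_osc R).mul_left 2)

theorem tendsto_truncationError {φ : Cfg d A → ℝ} (hs : SummableVariation φ) (R : ℕ) :
    Tendsto (truncationError φ R) atTop (𝓝 0) := by
  have hnonneg (n : ℕ) : 0 ≤ 2 * osc φ n := mul_nonneg two_pos.le (osc_nonneg φ n)
  have hpt (k : Fin d → ℤ) : Tendsto
      (fun L => min (2 * osc φ (L + 1 - supNorm k)) (2 * osc φ (supNorm k - R))) atTop (𝓝 0) := by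
    refine squeeze_zero (fun L => le_min (hnonneg _) (hnonneg _)) (fun L => min_le_left _ _) ?_
    have := (hs.tendsto_osc.comp
      ((tendsto_sub_atTop_nat (supNorm k)).comp (tendsto_add_atTop_nat 1))).const_mul 2
    simpa only [mul_zero, Function.comp_def] using this
  have hlim := tendsto_tsum_of_dominated_convergence (𝓕 := atTop)
    ((hs.summable_osc R).mul_left 2) hpt (.of_forall fun L k => by
      rw [Real.norm_of_nonneg (le_min (hnonneg _) (hnonneg _))]
      exact min_le_right _ _)
  rwa [tsum_zero] at hlim

variable [TopologicalSpace A] [CompactSpace A] {φ : Cfg d A → ℝ} {x y : Cfg d A}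
  {v w : Torus d N → A}

theorem AgreeOutside.abs_sub_shift_le (h : AgreeOutside R x y) (hφ : Continuous φ)
    (k : Fin d → ℤ) : |φ (shift k x) - φ (shift k y)| ≤ osc φ (supNorm k - R) :=
  abs_sub_le_osc hφ fun m hm => h _ <| by
    have := supNorm_add_le (k + m) (-m)
    rw [add_neg_cancel_right, supNorm_neg] at this
    omega

theorem TorusAgreeOutside.abs_sub_translate_le [NeZero N] (h : TorusAgreeOutside R v w)
    (hφ : Continuous φ) (t : Torus d N) :
    |φ (periodize N (translate t v)) - φ (periodize N (translate t w))|
      ≤ osc φ (supNorm (centered t) - R) := by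
  refine abs_sub_le_osc hφ fun m hm => ?_
  have := supNorm_centered_le_add t m
  simp only [periodize, Function.comp_apply, translate_apply]
  exact h _ (by omega)

theorem TorusAgreeOutside.abs_hamiltonian_sub_le [NeZero N] (h : TorusAgreeOutside R v w)
    (hφ : Continuous φ) (hs : SummableVariation φ) :
    |hamiltonian φ N v - hamiltonian φ N w| ≤ ∑' k : Fin d → ℤ, osc φ (supNorm k - R) := by
  rw [hamiltonian, hamiltonian, ← Finset.sum_sub_distrib]
  calc _ ≤ ∑ t : Torus d N, osc φ (supNorm (centered t) - R) :=
        (Finset.abs_sum_le_sum_abs _ _).trans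
          (Finset.sum_le_sum fun t _ => h.abs_sub_translate_le hφ t)
    _ = ∑' t : Torus d N, osc φ (supNorm (centered t) - R) := (tsum_fintype _).symm
    _ ≤ ∑' k : Fin d → ℤ, osc φ (supNorm k - R) :=
        tsum_comp_le_tsum_of_inj (hs.summable_osc R) (fun _ => osc_nonneg φ _) centered_injective

theorem abs_translate_sub_shift_le (hφ : Continuous φ) {L : ℕ}
    (hx : ∀ m, supNorm m ≤ L → periodize N v m = x m) (t : Torus d N) :
    |φ (periodize N (translate t v)) - φ (shift (centered t) x)|
      ≤ osc φ (L + 1 - supNorm (centered t)) := by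
  nth_rw 1 [← toTorus_centered t]
  rw [← shift_periodize]
  exact abs_sub_le_osc hφ fun m hm => hx _ ((supNorm_add_le _ _).trans (by omega))

theorem abs_hamiltonian_sub_sub_relativeEnergy_le [NeZero N] (hφ : Continuous φ)
    (hs : SummableVariation φ) {L : ℕ} (hL : 2 * L < N) (hxy : AgreeOutside R x y)
    (hvw : TorusAgreeOutside R v w) (hx : ∀ m, supNorm m ≤ L → periodize N v m = x m)
    (hy : ∀ m, supNorm m ≤ L → periodize N w m = y m) :
    |hamiltonian φ N v - hamiltonian φ N w - relativeEnergy φ x y| ≤ truncationError φ R L := by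
  let f (t : Torus d N) := φ (periodize N (translate t v)) - φ (periodize N (translate t w))
  let g (k : Fin d → ℤ) := φ (shift k x) - φ (shift k y)
  have hg (k : Fin d → ℤ) : |g k| ≤ osc φ (supNorm k - R) := hxy.abs_sub_shift_le hφ k
  have hf : HasSum (Function.extend centered f 0) (hamiltonian φ N v - hamiltonian φ N w) := by
    rw [hasSum_extend_zero centered_injective, hamiltonian, hamiltonian, ← Finset.sum_sub_distrib]
    exact hasSum_fintype f
  have hgsum : Summable g := .of_norm_bounded (hs.summable_osc R) hg
  have hdiff := hf.sub hgsum.hasSum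
  rw [relativeEnergy, ← hdiff.tsum_eq, ← Real.norm_eq_abs]
  refine tsum_of_norm_bounded (summable_truncationError hs R L).hasSum fun k => ?_
  rw [Real.norm_eq_abs]
  by_cases hk : ∃ t : Torus d N, centered t = k
  · obtain ⟨t, rfl⟩ := hk
    rw [centered_injective.extend_apply]
    have hv := abs_le.1 (abs_translate_sub_shift_le hφ hx t)
    have hw := abs_le.1 (abs_translate_sub_shift_le hφ hy t)
    have hft := abs_le.1 (hvw.abs_sub_translate_le hφ t)
    have hgt := abs_le.1 (hg (centered t))
    exact le_min (abs_le.2 (by constructor <;> simp only [f, g] <;> linarith))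
      (abs_le.2 (by constructor <;> simp only [f] <;> linarith))
  · have hkL : L + 1 - supNorm k = 0 := by
      by_contra hlt
      exact hk ⟨toTorus N k, centered_toTorus (by omega)⟩
    have hg0 : |g k| ≤ osc φ 0 := abs_sub_le_osc hφ fun m hm => by omega
    rw [Function.extend_apply' _ _ _ hk, Pi.zero_apply, zero_sub, abs_neg, hkL]
    exact le_min (by linarith [osc_nonneg φ 0]) (by linarith [hg k, osc_nonneg φ (supNorm k - R)])

end RelativeEnergy

/-! ### Tilings of the torus by boxes -/

section Tiling

variable {d : ℕ} {A : Type}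

/-- A site of the box `[0, n) ^ d` as a site of `ℤ ^ d`. -/
def site {n : ℕ} (k : Fin d → Fin n) : Fin d → ℤ := fun i => ((k i : ℕ) : ℤ)

/-- The torus of side length `N`, identified with the box `[0, N) ^ d`. -/
noncomputable def boxEquiv (N : ℕ) [NeZero N] : (Fin d → Fin N) ≃ Torus d N :=
  Equiv.piCongrRight fun _ => (ZMod.finEquiv N).toEquiv

theorem boxEquiv_apply {N : ℕ} [NeZero N] (k : Fin d → Fin N) :
    boxEquiv N k = toTorus N (site k) := by
  obtain ⟨n, rfl⟩ := Nat.exists_eq_succ_of_ne_zero (NeZero.ne N)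
  funext i
  change k i = (((k i : ℕ) : ℤ) : ZMod (n + 1))
  exact (Int.cast_natCast _).trans (ZMod.natCast_zmod_val (n := n + 1) (k i)) |>.symm

theorem hamiltonian_eq_sum_site {N : ℕ} [NeZero N] (φ : Cfg d A → ℝ) (w : Torus d N → A) :
    hamiltonian φ N w = ∑ k : Fin d → Fin N, φ (shift (site k) (periodize N w)) :=
  have hbij : Function.Bijective fun k : Fin d → Fin N => toTorus N (site k) :=
    (funext boxEquiv_apply : ⇑(boxEquiv N) = _) ▸ (boxEquiv N).bijective
  hamiltonian_eq_sum_shift φ hbij w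

variable {M m : ℕ} [NeZero (M * m)]

/-- The tiling of the torus of side length `M * m` by `M ^ d` boxes of side length `m`; the first
component is the index of a tile, the second one a position in this tile. -/
noncomputable def tileEquiv (d M m : ℕ) [NeZero (M * m)] :
    (Fin d → Fin M) × (Fin d → Fin m) ≃ Torus d (M * m) :=
  ((Equiv.arrowProdEquivProdArrow _ _ _).symm.trans
    (Equiv.piCongrRight fun _ => finProdFinEquiv)).trans (boxEquiv (M * m))

theorem tileEquiv_apply (i : Fin d → Fin M) (k : Fin d → Fin m) :
    tileEquiv d M m (i, k) = toTorus (M * m) (m • site i + site k) := by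
  change boxEquiv _ (fun j => finProdFinEquiv (i j, k j)) = _
  rw [boxEquiv_apply]
  congr 1
  funext j
  simp [site, finProdFinEquiv, add_comm]

/-- Assembling a pattern on the torus from patterns on the tiles. -/
noncomputable def tilePattern (M m : ℕ) [NeZero (M * m)] :
    ((Fin d → Fin M) → (Fin d → Fin m) → A) ≃ (Torus d (M * m) → A) :=
  (Equiv.curry _ _ _).symm.trans ((tileEquiv d M m).arrowCongr (Equiv.refl A))

theorem tilePattern_apply (z : (Fin d → Fin M) → (Fin d → Fin m) → A) (i : Fin d → Fin M)
    (k : Fin d → Fin m) : tilePattern M m z (toTorus (M * m) (m • site i + site k)) = z i k := by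
  rw [← tileEquiv_apply]
  simp [tilePattern, Function.uncurry]

theorem tilePattern_symm_apply (w : Torus d (M * m) → A) (i : Fin d → Fin M) (k : Fin d → Fin m) :
    (tilePattern M m).symm w i k = w (toTorus (M * m) (m • site i + site k)) := by
  rw [← tilePattern_apply ((tilePattern M m).symm w), Equiv.apply_symm_apply]

end Tiling

section CenteredTile

variable {d : ℕ} {A : Type} {M S : ℕ}

/-- The position, relative to its centre, of a site of a box of odd side length `2 * S + 1`. -/
def offset (S : ℕ) (k : Fin d → Fin (2 * S + 1)) : Fin d → ℤ := site k - fun _ => (S : ℤ)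

/-- The centre of a tile of odd side length `2 * S + 1`. -/
def tileCenter (S : ℕ) (i : Fin d → Fin M) : Fin d → ℤ :=
  (2 * S + 1) • site i + fun _ => (S : ℤ)

theorem exists_offset_eq {m : Fin d → ℤ} (hm : supNorm m ≤ S) : ∃ k, offset S k = m := by
  have hlt (i : Fin d) : (m i + S).toNat < 2 * S + 1 := by
    have := natAbs_le_supNorm m i
    omega
  refine ⟨fun i => ⟨_, hlt i⟩, funext fun i => ?_⟩
  have := natAbs_le_supNorm m i
  simp only [offset, site, Pi.sub_apply]
  omega

variable [NeZero (M * (2 * S + 1))]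

theorem tilePattern_tileCenter_add_offset (z : (Fin d → Fin M) → (Fin d → Fin (2 * S + 1)) → A)
    (i : Fin d → Fin M) (k : Fin d → Fin (2 * S + 1)) :
    tilePattern M (2 * S + 1) z (toTorus _ (tileCenter S i + offset S k)) = z i k := by
  rw [tileCenter, offset, add_assoc, add_sub_cancel, tilePattern_apply]

theorem periodize_translate_tilePattern_update (x : Cfg d A)
    (z : (Fin d → Fin M) → (Fin d → Fin (2 * S + 1)) → A) (i : Fin d → Fin M) {m : Fin d → ℤ}
    (hm : supNorm m ≤ S) :
    periodize _ (translate (toTorus _ (tileCenter S i))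
      (tilePattern M (2 * S + 1) (Function.update z i (x ∘ offset S)))) m = x m := by
  obtain ⟨k, rfl⟩ := exists_offset_eq hm
  rw [periodize, Function.comp_apply, translate_apply, ← map_add,
    tilePattern_tileCenter_add_offset, Function.update_self, Function.comp_apply]

theorem torusAgreeOutside_tilePattern_update {R : ℕ} {p q : (Fin d → Fin (2 * S + 1)) → A}
    (hpq : ∀ k, R < supNorm (offset S k) → p k = q k)
    (z : (Fin d → Fin M) → (Fin d → Fin (2 * S + 1)) → A) (i : Fin d → Fin M) :
    TorusAgreeOutside R
      (translate (toTorus _ (tileCenter S i)) (tilePattern M (2 * S + 1) (Function.update z i p)))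
      (translate (toTorus _ (tileCenter S i)) (tilePattern M (2 * S + 1) (Function.update z i q)))
    := by
  intro t ht
  obtain ⟨⟨j, k⟩, hjk⟩ := (tileEquiv d M (2 * S + 1)).surjective (toTorus _ (tileCenter S i) + t)
  rw [translate_apply, translate_apply, ← hjk, tileEquiv_apply, tilePattern_apply,
    tilePattern_apply]
  obtain rfl | hne := eq_or_ne j i
  · have ht' : t = toTorus _ (offset S k) := by
      rw [← add_right_inj (toTorus _ (tileCenter S j)), ← hjk, tileEquiv_apply, ← map_add,
        tileCenter, offset, add_assoc, add_sub_cancel]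
    rw [Function.update_self, Function.update_self]
    exact hpq k (ht.trans_le (ht' ▸ supNorm_centered_toTorus_le _))
  · rw [Function.update_of_ne hne, Function.update_of_ne hne]

end CenteredTile

/-! ### Block entropy -/

section BlockEntropy

variable {d : ℕ} {A : Type}

/-- The pattern of a configuration on the box `[0, n) ^ d`. -/
def boxPattern (n : ℕ) (x : Cfg d A) : (Fin d → Fin n) → A := fun k => x (site k)

theorem cylE_eq_preimage (n : ℕ) (w : (Fin d → Fin n) → A) : cylE n w = boxPattern n ⁻¹' {w} := by
  ext x
  exact funext_iff.symm

section Topology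

variable [TopologicalSpace A]

theorem continuous_shift (n : Fin d → ℤ) : Continuous (shift n : Cfg d A → Cfg d A) :=
  continuous_pi fun m => continuous_apply (n + m)

theorem continuous_boxPattern (n : ℕ) : Continuous (boxPattern n : Cfg d A → _) :=
  continuous_pi fun k => continuous_apply (site k)

theorem isClopen_cylE [DiscreteTopology A] (n : ℕ) (w : (Fin d → Fin n) → A) :
    IsClopen (cylE n w) := by
  rw [cylE_eq_preimage]
  exact (isClopen_discrete _).preimage (continuous_boxPattern n)

end Topology

variable [MeasurableSpace A]

theorem measurable_shift (n : Fin d → ℤ) : Measurable (shift n : Cfg d A → Cfg d A) :=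
  measurable_pi_lambda _ fun m => measurable_pi_apply (n + m)

theorem measurable_boxPattern (n : ℕ) : Measurable (boxPattern n : Cfg d A → _) :=
  measurable_pi_lambda _ fun k => measurable_pi_apply (site k)

variable [Fintype A]

/-- The entropy per site of the restriction of `μ` to the box `[0, n) ^ d`. -/
noncomputable def blockEntropy (μ : Measure (Cfg d A)) (n : ℕ) : ℝ :=
  ((n : ℝ) ^ d)⁻¹ * shannonEntropy (μ.map (boxPattern n))

variable [MeasurableSingletonClass A]

theorem blockEntropy_eq_sum_cylE (μ : Measure (Cfg d A)) (n : ℕ) :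
    blockEntropy μ n = ((n : ℝ) ^ d)⁻¹ * ∑ w, Real.negMulLog (μ (cylE n w)).toReal := by
  simp only [blockEntropy, shannonEntropy, cylE_eq_preimage,
    map_measureReal_apply (measurable_boxPattern n) (measurableSet_singleton _)]
  rfl

theorem entropy_eq_iInf (μ : Measure (Cfg d A)) :
    entropy μ = ⨅ n : {n : ℕ // 1 ≤ n}, blockEntropy μ n := by
  simp only [entropy, blockEntropy_eq_sum_cylE]

theorem le_entropy {μ : Measure (Cfg d A)} {c : ℝ} (h : ∀ n, 1 ≤ n → c ≤ blockEntropy μ n) :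
    c ≤ entropy μ := by
  have : Nonempty {n : ℕ // 1 ≤ n} := ⟨⟨1, le_rfl⟩⟩
  rw [entropy_eq_iInf]
  exact le_ciInf fun n => h n n.2

variable (μ : Measure (Cfg d A)) [IsProbabilityMeasure μ]

theorem blockEntropy_nonneg (n : ℕ) : 0 ≤ blockEntropy μ n := by
  rw [blockEntropy_eq_sum_cylE]
  have hterm (w : (Fin d → Fin n) → A) : 0 ≤ Real.negMulLog (μ (cylE n w)).toReal :=
    Real.negMulLog_nonneg ENNReal.toReal_nonneg
      (ENNReal.toReal_le_of_le_ofReal one_pos.le (by simpa using prob_le_one))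
  have := Finset.sum_nonneg fun w (_ : w ∈ Finset.univ) => hterm w
  positivity

theorem entropy_le_blockEntropy {n : ℕ} (hn : 1 ≤ n) : entropy μ ≤ blockEntropy μ n := by
  rw [entropy_eq_iInf]
  have hbdd : BddBelow (Set.range fun n : {n : ℕ // 1 ≤ n} => blockEntropy μ n) :=
    ⟨0, Set.forall_mem_range.2 fun n => blockEntropy_nonneg μ n⟩
  exact ciInf_le hbdd ⟨n, hn⟩

end BlockEntropy

/-! ### Gibbs measures on the torus -/

section TorusGibbs

variable {d : ℕ} {A : Type} [MeasurableSpace A]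

/-- The Gibbs measure on the patterns of the torus of side length `N`. -/
noncomputable def torusGibbs (φ : Cfg d A → ℝ) (β : ℝ) (N : ℕ) [NeZero N] :
    Measure (Torus d N → A) :=
  gibbsMeasure fun w => β * hamiltonian φ N w

/-- The periodic Gibbs measure of period `N`, a measure on configurations. -/
noncomputable def periodicGibbs (φ : Cfg d A → ℝ) (β : ℝ) (N : ℕ) [NeZero N] :
    Measure (Cfg d A) :=
  (torusGibbs φ β N).map (periodize N)

theorem measurable_periodize (N : ℕ) : Measurable (periodize N : (Torus d N → A) → Cfg d A) :=
  measurable_pi_lambda _ fun m => measurable_pi_apply (toTorus N m)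

variable [Finite A] [MeasurableSingletonClass A] (φ : Cfg d A → ℝ) (β : ℝ) (N : ℕ) [NeZero N]

instance [Nonempty A] : IsProbabilityMeasure (torusGibbs φ β N) :=
  inferInstanceAs (IsProbabilityMeasure (gibbsMeasure _))

instance [Nonempty A] : IsProbabilityMeasure (periodicGibbs φ β N) :=
  Measure.isProbabilityMeasure_map (measurable_periodize N).aemeasurable

theorem torusGibbs_map_translate (t : Torus d N) :
    (torusGibbs φ β N).map (translate t) = torusGibbs φ β N :=
  gibbsMeasure_map_equiv _ _ fun w => by rw [hamiltonian_translate]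

theorem map_shift_periodize_torusGibbs (k : Fin d → ℤ) :
    (torusGibbs φ β N).map (fun w => shift k (periodize N w)) = periodicGibbs φ β N := by
  simp only [shift_periodize]
  rw [← Function.comp_def (periodize N),
    ← Measure.map_map (measurable_periodize N) (measurable_of_finite _), torusGibbs_map_translate,
    periodicGibbs]

theorem invariant_periodicGibbs : Invariant (periodicGibbs φ β N) := fun k => by
  rw [periodicGibbs, Measure.map_map (measurable_shift k) (measurable_periodize N)]
  exact map_shift_periodize_torusGibbs φ β N k

theorem integral_hamiltonian_torusGibbs [Nonempty A] (hφ : Measurable φ) :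
    ∫ w, hamiltonian φ N w ∂torusGibbs φ β N = (N : ℝ) ^ d * ∫ x, φ x ∂periodicGibbs φ β N := by
  have hterm (k : Fin d → Fin N) : ∫ w, φ (shift (site k) (periodize N w)) ∂torusGibbs φ β N =
      ∫ x, φ x ∂periodicGibbs φ β N := by
    rw [← map_shift_periodize_torusGibbs φ β N (site k), integral_map]
    · exact ((measurable_shift _).comp (measurable_periodize N)).aemeasurable
    · exact hφ.aestronglyMeasurable
  simp only [hamiltonian_eq_sum_site]
  rw [integral_finsetSum _ fun _ _ => .of_finite]
  simp [hterm]

variable {N} in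
theorem map_tilePattern_symm_torusGibbs {M m : ℕ} [NeZero (M * m)] (i : Fin d → Fin M) :
    (torusGibbs φ β (M * m)).map (fun w => (tilePattern M m).symm w i) =
      (periodicGibbs φ β (M * m)).map (boxPattern m) := by
  have hmeas : Measurable fun w : Torus d (M * m) → A => shift (m • site i) (periodize _ w) :=
    (measurable_shift _).comp (measurable_periodize _)
  rw [← map_shift_periodize_torusGibbs φ β _ (m • site i),
    Measure.map_map (measurable_boxPattern m) hmeas]
  congr 1
  funext w k
  rw [tilePattern_symm_apply]
  rfl

end TorusGibbs

section TorusPressure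

variable {d : ℕ} {A : Type} [Fintype A]

/-- The partition function of the torus of side length `N`. -/
noncomputable def partitionFunction (φ : Cfg d A → ℝ) (β : ℝ) (N : ℕ) [NeZero N] : ℝ :=
  ∑ w : Torus d N → A, Real.exp (β * hamiltonian φ N w)

/-- The logarithm of the partition function per site. -/
noncomputable def torusPressure (φ : Cfg d A → ℝ) (β : ℝ) (N : ℕ) [NeZero N] : ℝ :=
  ((N : ℝ) ^ d)⁻¹ * Real.log (partitionFunction φ β N)

theorem partitionFunction_pos [Nonempty A] (φ : Cfg d A → ℝ) (β : ℝ) (N : ℕ) [NeZero N] :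
    0 < partitionFunction φ β N :=
  Finset.sum_pos (fun _ _ => Real.exp_pos _) Finset.univ_nonempty

variable [MeasurableSpace A] [MeasurableSingletonClass A] (φ : Cfg d A → ℝ) (β : ℝ) (N : ℕ)
  [NeZero N]

theorem torusPressure_le_blockEntropy_add [Nonempty A] (hφ : Measurable φ) {M m : ℕ}
    (hN : N = M * m) :
    torusPressure φ β N ≤ blockEntropy (periodicGibbs φ β N) m +
      β * ∫ x, φ x ∂periodicGibbs φ β N := by
  subst hN
  have hpos : ((M * m : ℕ) : ℝ) ≠ 0 := Nat.cast_ne_zero.2 (NeZero.ne _)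
  have hsub : shannonEntropy (torusGibbs φ β (M * m)) ≤
      (M : ℝ) ^ d * shannonEntropy ((periodicGibbs φ β (M * m)).map (boxPattern m)) := by
    have := shannonEntropy_le_sum_map (torusGibbs φ β (M * m))
      (fun (i : Fin d → Fin M) w => (tilePattern M m).symm w i) (tilePattern M m).symm.injective
    simpa [map_tilePattern_symm_torusGibbs] using this
  have hlog : Real.log (partitionFunction φ β (M * m)) = shannonEntropy (torusGibbs φ β (M * m)) +
      β * (((M * m : ℕ) : ℝ) ^ d * ∫ x, φ x ∂periodicGibbs φ β (M * m)) := by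
    rw [← integral_hamiltonian_torusGibbs φ β _ hφ, ← integral_const_mul]
    exact (shannonEntropy_gibbsMeasure_add_integral _).symm
  calc torusPressure φ β (M * m)
      ≤ (((M * m : ℕ) : ℝ) ^ d)⁻¹ *
          ((M : ℝ) ^ d * shannonEntropy ((periodicGibbs φ β (M * m)).map (boxPattern m)) +
          β * (((M * m : ℕ) : ℝ) ^ d * ∫ x, φ x ∂periodicGibbs φ β (M * m))) := by
        rw [torusPressure, hlog]
        gcongr
    _ = _ := by
        push_cast at hpos ⊢
        obtain ⟨hM, hm⟩ := mul_ne_zero_iff.1 hpos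
        rw [blockEntropy, mul_pow]
        field_simp

end TorusPressure

/-! ### Weak limits of periodic Gibbs measures -/

section WeakLimit

variable {d : ℕ} {A : Type} [Finite A] [TopologicalSpace A] [DiscreteTopology A]
  [MeasurableSpace A] [BorelSpace A]

instance : HasOuterApproxClosed (Cfg d A) :=
  let _ : MetricSpace (Cfg d A) := TopologicalSpace.metrizableSpaceMetric (Cfg d A)
  inferInstance

variable {ι : Type*} {l : Filter ι} {P : ι → ProbabilityMeasure (Cfg d A)}
  {μ : ProbabilityMeasure (Cfg d A)}

theorem tendsto_integral_of_tendsto (h : Tendsto P l (𝓝 μ)) {φ : Cfg d A → ℝ}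
    (hφ : Continuous φ) :
    Tendsto (fun j => ∫ x, φ x ∂(P j : Measure (Cfg d A))) l (𝓝 (∫ x, φ x ∂μ)) :=
  ProbabilityMeasure.tendsto_iff_forall_integral_tendsto.1 h
    (BoundedContinuousFunction.mkOfCompact ⟨φ, hφ⟩)

theorem invariant_of_tendsto [l.NeBot] (h : Tendsto P l (𝓝 μ))
    (hP : ∀ j, Invariant (P j : Measure (Cfg d A))) : Invariant (μ : Measure (Cfg d A)) := by
  intro n
  have hmap := ProbabilityMeasure.tendsto_map_of_tendsto_of_continuous P μ h (continuous_shift n)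
  have hinv (j : ι) : (P j).map (continuous_shift n).measurable.aemeasurable = P j :=
    Subtype.ext (hP j n)
  simp only [hinv] at hmap
  exact congrArg ProbabilityMeasure.toMeasure (tendsto_nhds_unique hmap h)

end WeakLimit

section PressureLimit

variable {d : ℕ} {A : Type} [Fintype A] [TopologicalSpace A] [DiscreteTopology A]
  [MeasurableSpace A] [BorelSpace A]

theorem tendsto_blockEntropy_of_tendsto {ι : Type*} {l : Filter ι}
    {P : ι → ProbabilityMeasure (Cfg d A)} {μ : ProbabilityMeasure (Cfg d A)}
    (h : Tendsto P l (𝓝 μ)) (n : ℕ) :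
    Tendsto (fun j => blockEntropy (P j : Measure (Cfg d A)) n) l
      (𝓝 (blockEntropy (μ : Measure (Cfg d A)) n)) := by
  simp only [blockEntropy_eq_sum_cylE]
  refine (tendsto_finsetSum _ fun w _ => ?_).const_mul _
  have hcyl := ProbabilityMeasure.tendsto_measure_of_null_frontier_of_tendsto' h
    (E := cylE n w) (by rw [(isClopen_cylE n w).frontier_eq, measure_empty])
  exact (Real.continuous_negMulLog.tendsto _).comp
    ((ENNReal.tendsto_toReal (measure_ne_top _ _)).comp hcyl)

instance (j : ℕ) : NeZero j.factorial := ⟨j.factorial_ne_zero⟩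

variable [Nonempty A] {φ : Cfg d A → ℝ}

/-- Along factorials every box size eventually divides the period, so that the torus is tiled
exactly by boxes of this size. -/
theorem exists_invariant_forall_le_entropy_add (hφ : Continuous φ) (β : ℝ) (l : Filter ℕ)
    [l.NeBot] (hl : l ≤ atTop) :
    ∃ μ : Measure (Cfg d A), IsProbabilityMeasure μ ∧ Invariant μ ∧
      ∀ c, (∀ᶠ j in l, c ≤ torusPressure φ β j.factorial) → c ≤ entropy μ + β * ∫ x, φ x ∂μ := by
  let P (j : ℕ) : ProbabilityMeasure (Cfg d A) := ⟨periodicGibbs φ β j.factorial, inferInstance⟩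
  obtain ⟨μ, -, hμ⟩ := isCompact_univ.ultrafilter_le_nhds ((Ultrafilter.of l).map P) (by simp)
  have hμ : Tendsto P (Ultrafilter.of l) (𝓝 μ) := hμ
  have hof : (Ultrafilter.of l : Filter ℕ) ≤ l := Ultrafilter.of_le l
  refine ⟨μ, inferInstance, invariant_of_tendsto hμ fun j => invariant_periodicGibbs φ β _,
    fun c hc => ?_⟩
  suffices hblock : ∀ n, 1 ≤ n → c - β * ∫ x, φ x ∂μ ≤ blockEntropy (μ : Measure (Cfg d A)) n by
    linarith [le_entropy hblock]
  intro n hn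
  have hlim := (tendsto_blockEntropy_of_tendsto hμ n).add
    ((tendsto_integral_of_tendsto hμ hφ).const_mul β)
  have hle : ∀ᶠ j in (Ultrafilter.of l : Filter ℕ), c ≤ blockEntropy (P j : Measure (Cfg d A)) n +
      β * ∫ x, φ x ∂(P j : Measure (Cfg d A)) := by
    filter_upwards [hof hc, hof (hl (eventually_ge_atTop n))] with j hj hnj
    obtain ⟨M, hM⟩ := Nat.dvd_factorial hn hnj
    exact hj.trans (torusPressure_le_blockEntropy_add φ β _ hφ.measurable (hM.trans (mul_comm n M)))
  linarith [ge_of_tendsto hlim hle]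

end PressureLimit

/-! ### Boundary effects -/

section Wrap

variable {d : ℕ} {A : Type} {N : ℕ} [NeZero N]

/-- Wrapping a pattern on the box `[0, N) ^ d` around the torus of side length `N`. -/
noncomputable def wrap (N : ℕ) [NeZero N] : ((Fin d → Fin N) → A) ≃ (Torus d N → A) :=
  (boxEquiv N).arrowCongr (Equiv.refl A)

theorem wrap_toTorus_site (p : (Fin d → Fin N) → A) (k : Fin d → Fin N) :
    wrap N p (toTorus N (site k)) = p k := by
  simp [wrap, ← boxEquiv_apply]

theorem periodize_wrap_boxPattern (x : Cfg d A) {m : Fin d → ℤ} (h0 : ∀ i, 0 ≤ m i)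
    (hN : ∀ i, m i < N) : periodize N (wrap N (boxPattern N x)) m = x m := by
  obtain ⟨k, rfl⟩ : ∃ k : Fin d → Fin N, site k = m :=
    ⟨fun i => ⟨(m i).toNat, by have := h0 i; have := hN i; omega⟩,
      funext fun i => Int.toNat_of_nonneg (h0 i)⟩
  exact wrap_toTorus_site _ k

end Wrap

section Interior

variable {d : ℕ}

/-- The sites of the box `[0, N) ^ d` whose ball of radius `r - 1` is contained in the box. -/
noncomputable def interiorSites (d N r : ℕ) : Finset (Fin d → Fin N) :=
  {k | ∀ i, r ≤ (k i : ℕ) ∧ (k i : ℕ) + r ≤ N}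

theorem pow_le_card_interiorSites (d N r : ℕ) : (N - 2 * r) ^ d ≤ (interiorSites d N r).card := by
  have hlt (a : Fin (N - 2 * r)) : (a : ℕ) + r < N := by omega
  let f (k : Fin d → Fin (N - 2 * r)) (i : Fin d) : Fin N := ⟨k i + r, hlt (k i)⟩
  have hf : Function.Injective f := fun k l h => funext fun i => by
    simpa [f, Fin.ext_iff] using congrFun h i
  calc (N - 2 * r) ^ d = (Finset.univ.map ⟨f, hf⟩).card := by simp
    _ ≤ (interiorSites d N r).card := Finset.card_le_card fun k hk => by
        obtain ⟨l, -, rfl⟩ := Finset.mem_map.1 hk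
        simp only [interiorSites, Finset.mem_filter, Finset.mem_univ, true_and]
        exact fun i => ⟨Nat.le_add_left _ _, by simp only [f, Function.Embedding.coeFn_mk]; omega⟩

/-- A bound for the error per site made by wrapping a configuration around the torus of side
length `N`: sites at distance at least `r` from the boundary contribute the first term. -/
noncomputable def boundaryError {A : Type} (φ : Cfg d A → ℝ) (r N : ℕ) : ℝ :=
  osc φ r + (1 - ((N - 2 * r : ℕ) / N : ℝ) ^ d) * osc φ 0

theorem tendsto_boundaryError {A : Type} (φ : Cfg d A → ℝ) (r : ℕ) :
    Tendsto (boundaryError φ r) atTop (𝓝 (osc φ r)) := by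
  have hratio : Tendsto (fun N : ℕ => ((N - 2 * r : ℕ) / N : ℝ)) atTop (𝓝 1) := by
    have hlim := (tendsto_const_div_atTop_nhds_zero_nat (2 * r : ℝ)).const_sub 1
    rw [sub_zero] at hlim
    refine hlim.congr' ?_
    filter_upwards [eventually_ge_atTop (2 * r), eventually_gt_atTop 0] with N hrN hN
    push_cast [hrN]
    field_simp
  have hlim := (((hratio.pow d).const_sub 1).mul_const (osc φ 0)).const_add (osc φ r)
  rwa [one_pow, sub_self, zero_mul, add_zero] at hlim

end Interior

section Comparison

variable {d : ℕ} {A : Type} [TopologicalSpace A] {φ : Cfg d A → ℝ}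

theorem abs_sum_shift_sub_hamiltonian_le [CompactSpace A] (hφ : Continuous φ) (r N : ℕ) [NeZero N]
    (x : Cfg d A) :
    |∑ k : Fin d → Fin N, φ (shift (site k) x) - hamiltonian φ N (wrap N (boxPattern N x))| ≤
      (N : ℝ) ^ d * boundaryError φ r N := by
  set y := periodize N (wrap N (boxPattern N x))
  have hinterior : ∀ k ∈ interiorSites d N r,
      |φ (shift (site k) x) - φ (shift (site k) y)| ≤ osc φ r := fun k hk => by
    refine abs_sub_le_osc hφ fun m hm => (periodize_wrap_boxPattern x ?_ ?_).symm <;> intro i <;>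
    · have hki := (Finset.mem_filter.1 hk).2 i
      have := natAbs_le_supNorm m i
      simp only [Pi.add_apply, site]
      omega
  have hall : ∀ k ∈ (interiorSites d N r)ᶜ,
      |φ (shift (site k) x) - φ (shift (site k) y)| ≤ osc φ 0 :=
    fun k _ => abs_sub_le_osc hφ fun m hm => absurd hm (supNorm m).not_lt_zero
  have hN : (N : ℝ) ≠ 0 := Nat.cast_ne_zero.2 (NeZero.ne N)
  have hcompl : (((interiorSites d N r)ᶜ.card : ℕ) : ℝ) ≤ (N : ℝ) ^ d - (N - 2 * r : ℕ) ^ d := by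
    have hcard := Finset.card_add_card_compl (interiorSites d N r)
    have hle := pow_le_card_interiorSites d N r
    rw [Fintype.card_fun, Fintype.card_fin, Fintype.card_fin] at hcard
    rw [le_sub_iff_add_le]
    exact_mod_cast (by omega : (interiorSites d N r)ᶜ.card + (N - 2 * r) ^ d ≤ N ^ d)
  have hcard : ((interiorSites d N r).card : ℝ) ≤ (N : ℝ) ^ d := by
    simpa using Nat.cast_le (α := ℝ).2 (Finset.card_le_univ (interiorSites d N r))
  rw [hamiltonian_eq_sum_site, ← Finset.sum_sub_distrib]
  calc _ ≤ ∑ k, |φ (shift (site k) x) - φ (shift (site k) y)| := Finset.abs_sum_le_sum_abs _ _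
    _ ≤ (interiorSites d N r).card * osc φ r + (interiorSites d N r)ᶜ.card * osc φ 0 := by
        rw [← Finset.sum_add_sum_compl (interiorSites d N r), ← nsmul_eq_mul, ← nsmul_eq_mul]
        exact add_le_add (Finset.sum_le_card_nsmul _ _ _ hinterior)
          (Finset.sum_le_card_nsmul _ _ _ hall)
    _ ≤ (N : ℝ) ^ d * osc φ r + ((N : ℝ) ^ d - (N - 2 * r : ℕ) ^ d) * osc φ 0 := by
        have := osc_nonneg φ
        gcongr <;> apply this
    _ = (N : ℝ) ^ d * boundaryError φ r N := by
        rw [boundaryError, div_pow]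
        field_simp

variable [Finite A] [DiscreteTopology A] [MeasurableSpace A] [BorelSpace A]

variable {μ : Measure (Cfg d A)}

theorem integrable_of_continuous [IsFiniteMeasure μ] (hφ : Continuous φ) : Integrable φ μ := by
  obtain ⟨C, hC⟩ := exists_forall_abs_le hφ
  exact .of_bound hφ.aestronglyMeasurable C (.of_forall hC)

theorem integral_shift (hφ : Continuous φ) (hμ : Invariant μ) (n : Fin d → ℤ) :
    ∫ x, φ (shift n x) ∂μ = ∫ x, φ x ∂μ := by
  conv_rhs => rw [← hμ n]
  exact (integral_map (measurable_shift n).aemeasurable hφ.aestronglyMeasurable).symm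

theorem abs_integral_sub_integral_hamiltonian_le [IsProbabilityMeasure μ] (hφ : Continuous φ)
    (hμ : Invariant μ) (r N : ℕ) [NeZero N] :
    |(N : ℝ) ^ d * ∫ x, φ x ∂μ - ∫ p, hamiltonian φ N (wrap N p) ∂μ.map (boxPattern N)| ≤
      (N : ℝ) ^ d * boundaryError φ r N := by
  have hint (k : Fin d → Fin N) : Integrable (fun x => φ (shift (site k) x)) μ :=
    integrable_of_continuous (hφ.comp (continuous_shift (site k)))
  have hsum : ∫ x, ∑ k : Fin d → Fin N, φ (shift (site k) x) ∂μ = (N : ℝ) ^ d * ∫ x, φ x ∂μ := by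
    rw [integral_finsetSum _ fun k _ => hint k]
    simp [integral_shift hφ hμ]
  have hham : Integrable (fun x => hamiltonian φ N (wrap N (boxPattern N x))) μ :=
    (Integrable.of_finite (f := fun p => hamiltonian φ N (wrap N p))).comp_measurable
      (measurable_boxPattern N)
  have hbound : ∀ᵐ x ∂μ, ‖∑ k : Fin d → Fin N, φ (shift (site k) x) -
      hamiltonian φ N (wrap N (boxPattern N x))‖ ≤ (N : ℝ) ^ d * boundaryError φ r N :=
    .of_forall (abs_sum_shift_sub_hamiltonian_le hφ r N)
  rw [← hsum, integral_map (measurable_boxPattern N).aemeasurable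
    (measurable_of_finite _).aestronglyMeasurable,
    ← integral_sub (integrable_finsetSum _ fun k _ => hint k) hham]
  simpa using norm_integral_le_of_norm_le_const hbound

end Comparison

section VariationalBound

variable {d : ℕ} {A : Type} [Fintype A] [TopologicalSpace A] [DiscreteTopology A]
  [MeasurableSpace A] [BorelSpace A] {φ : Cfg d A → ℝ}

theorem blockEntropy_add_integral_le_torusPressure (μ : Measure (Cfg d A)) [IsProbabilityMeasure μ]
    (β : ℝ) (N : ℕ) [NeZero N] :
    blockEntropy μ N + β * (((N : ℝ) ^ d)⁻¹ *
      ∫ p, hamiltonian φ N (wrap N p) ∂μ.map (boxPattern N)) ≤ torusPressure φ β N := by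
  have : IsProbabilityMeasure (μ.map (boxPattern N)) :=
    Measure.isProbabilityMeasure_map (measurable_boxPattern N).aemeasurable
  have hgibbs := shannonEntropy_add_integral_le (μ.map (boxPattern N))
    fun p => β * hamiltonian φ N (wrap N p)
  have hZ : ∑ p, Real.exp (β * hamiltonian φ N (wrap N p)) = partitionFunction φ β N :=
    (wrap N).sum_comp fun w => Real.exp (β * hamiltonian φ N w)
  rw [integral_const_mul, hZ] at hgibbs
  calc _ = ((N : ℝ) ^ d)⁻¹ * (shannonEntropy (μ.map (boxPattern N)) +
        β * ∫ p, hamiltonian φ N (wrap N p) ∂μ.map (boxPattern N)) := by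
        rw [blockEntropy]
        ring
    _ ≤ torusPressure φ β N := by
        rw [torusPressure]
        gcongr

theorem entropy_add_integral_le_torusPressure (hφ : Continuous φ) {μ : Measure (Cfg d A)}
    [IsProbabilityMeasure μ] (hμ : Invariant μ) (β : ℝ) (r N : ℕ) [NeZero N] :
    entropy μ + β * ∫ x, φ x ∂μ ≤ torusPressure φ β N + |β| * boundaryError φ r N := by
  have hpos : (0 : ℝ) < (N : ℝ) ^ d := pow_pos (Nat.cast_pos.2 (NeZero.pos N)) d
  set E := ∫ p, hamiltonian φ N (wrap N p) ∂μ.map (boxPattern N)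
  have henergy : |∫ x, φ x ∂μ - ((N : ℝ) ^ d)⁻¹ * E| ≤ boundaryError φ r N := by
    refine le_of_mul_le_mul_left ?_ hpos
    rw [← abs_of_pos hpos, ← abs_mul, abs_of_pos hpos, mul_sub, mul_inv_cancel_left₀ hpos.ne']
    exact abs_integral_sub_integral_hamiltonian_le hφ hμ r N
  have hβ : β * (∫ x, φ x ∂μ - ((N : ℝ) ^ d)⁻¹ * E) ≤ |β| * boundaryError φ r N :=
    (le_abs_self _).trans ((abs_mul _ _).trans_le (by gcongr))
  have hent := entropy_le_blockEntropy μ (Nat.one_le_iff_ne_zero.2 (NeZero.ne N))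
  have hblock := blockEntropy_add_integral_le_torusPressure (φ := φ) μ β N
  linarith

theorem eventually_entropy_add_integral_le (hφ : Continuous φ) (hs : SummableVariation φ) (β : ℝ)
    {ε : ℝ} (hε : 0 < ε) :
    ∀ᶠ N in atTop, ∀ (_ : NeZero N) (μ : Measure (Cfg d A)), IsProbabilityMeasure μ →
      Invariant μ → entropy μ + β * ∫ x, φ x ∂μ ≤ torusPressure φ β N + ε := by
  have hosc : Tendsto (fun r => |β| * osc φ r) atTop (𝓝 0) := by
    simpa using hs.tendsto_osc.const_mul |β|
  obtain ⟨r, hr⟩ := (hosc.eventually_lt_const hε).exists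
  filter_upwards [((tendsto_boundaryError φ r).const_mul |β|).eventually_lt_const hr]
    with N hN _ μ _ hμ
  linarith [entropy_add_integral_le_torusPressure hφ hμ β r N]

end VariationalBound

/-! ### Pressure and equilibrium states -/

section Pressure

variable {d : ℕ} {A : Type} [Fintype A] [TopologicalSpace A] [DiscreteTopology A]
  [MeasurableSpace A] [BorelSpace A] {φ : Cfg d A → ℝ}

theorem entropy_add_integral_le_pressure (hφ : Continuous φ) (hs : SummableVariation φ) (β : ℝ)
    {μ : Measure (Cfg d A)} (hμ : IsProbabilityMeasure μ) (hinv : Invariant μ) :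
    entropy μ + β * ∫ x, φ x ∂μ ≤ pressure φ β := by
  obtain ⟨N, hN, hN0⟩ := ((eventually_entropy_add_integral_le hφ hs β one_pos).and
    (eventually_ne_atTop 0)).exists
  have : NeZero N := ⟨hN0⟩
  refine le_csSup ⟨torusPressure φ β N + 1, ?_⟩ ⟨μ, hμ, hinv, rfl⟩
  rintro r ⟨ν, hν, hνinv, rfl⟩
  exact hN ‹_› ν hν hνinv

theorem mem_ES_iff (hφ : Continuous φ) (hs : SummableVariation φ) {β : ℝ}
    {μ : Measure (Cfg d A)} :
    μ ∈ ES φ β ↔ IsProbabilityMeasure μ ∧ Invariant μ ∧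
      pressure φ β ≤ entropy μ + β * ∫ x, φ x ∂μ :=
  and_congr_right fun hμ => and_congr_right fun hinv =>
    ⟨Eq.ge, (entropy_add_integral_le_pressure hφ hs β hμ hinv).antisymm⟩

variable [Nonempty A]

theorem tendsto_torusPressure_factorial (hφ : Continuous φ) (hs : SummableVariation φ) (β : ℝ) :
    Tendsto (fun j : ℕ => torusPressure φ β j.factorial) atTop (𝓝 (pressure φ β)) := by
  refine tendsto_order.2 ⟨fun c hc => ?_, fun c hc => ?_⟩
  · have hfactorial : Tendsto Nat.factorial atTop atTop :=
      tendsto_atTop_mono Nat.self_le_factorial tendsto_id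
    filter_upwards [hfactorial.eventually
      (eventually_entropy_add_integral_le hφ hs β (half_pos (sub_pos.2 hc)))] with j hj
    have hle : pressure φ β ≤ torusPressure φ β j.factorial + (pressure φ β - c) / 2 := by
      refine csSup_le ⟨_, periodicGibbs φ 0 1, inferInstance, invariant_periodicGibbs φ 0 1, rfl⟩ ?_
      rintro r ⟨μ, hμ, hinv, rfl⟩
      exact hj inferInstance μ hμ hinv
    linarith
  · by_contra hfreq
    simp only [not_eventually, not_lt] at hfreq
    have : (atTop ⊓ 𝓟 {j : ℕ | c ≤ torusPressure φ β j.factorial}).NeBot :=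
      frequently_mem_iff_neBot.1 hfreq
    obtain ⟨μ, hμ, hinv, hmax⟩ := exists_invariant_forall_le_entropy_add hφ β
      (atTop ⊓ 𝓟 {j : ℕ | c ≤ torusPressure φ β j.factorial}) inf_le_left
    exact hc.not_ge ((hmax c (mem_inf_of_right (mem_principal_self _))).trans
      (entropy_add_integral_le_pressure hφ hs β hμ hinv))

theorem ES_nonempty (hφ : Continuous φ) (hs : SummableVariation φ) (β : ℝ) :
    (ES φ β).Nonempty := by
  obtain ⟨μ, hμ, hinv, hmax⟩ := exists_invariant_forall_le_entropy_add hφ β atTop le_rfl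
  refine ⟨μ, (mem_ES_iff hφ hs).2 ⟨hμ, hinv, le_of_forall_lt fun c hc => ?_⟩⟩
  obtain ⟨c', hcc', hc'⟩ := exists_between hc
  exact hcc'.trans_le (hmax c' (((tendsto_torusPressure_factorial hφ hs β).eventually_const_lt
    hc').mono fun _ => le_of_lt))

end Pressure

section EquilibriumStates

variable {d : ℕ} {A : Type} [Fintype A] [TopologicalSpace A] [DiscreteTopology A]
  [MeasurableSpace A] [BorelSpace A] {φ : Cfg d A → ℝ}

theorem ES_eq_of_integral_eq (hφ : Continuous φ) (hs : SummableVariation φ)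
    (h : ∀ μ ν : Measure (Cfg d A), IsProbabilityMeasure μ → Invariant μ →
      IsProbabilityMeasure ν → Invariant ν → ∫ x, φ x ∂μ = ∫ x, φ x ∂ν) (β β' : ℝ) :
    ES φ β = ES φ β' := by
  have hsub (β β' : ℝ) : ES φ β ⊆ ES φ β' := fun μ hμ => by
    obtain ⟨hprob, hinv, hmax⟩ := (mem_ES_iff hφ hs).1 hμ
    refine (mem_ES_iff hφ hs).2 ⟨hprob, hinv, csSup_le ⟨_, μ, hprob, hinv, rfl⟩ ?_⟩
    rintro _ ⟨ν, hν, hνinv, rfl⟩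
    have hle := (entropy_add_integral_le_pressure hφ hs β hν hνinv).trans hmax
    rw [h ν μ hν hνinv hprob hinv] at hle ⊢
    linarith
  exact (hsub β β').antisymm (hsub β' β)

theorem ES_ne_of_pressure_midpoint_lt [Nonempty A] (hφ : Continuous φ) (hs : SummableVariation φ)
    {β β' : ℝ} (h : 2 * pressure φ ((β + β') / 2) < pressure φ β + pressure φ β') :
    ES φ β ≠ ES φ β' := by
  intro heq
  obtain ⟨μ, hμ⟩ := ES_nonempty hφ hs β
  obtain ⟨hprob, hinv, hβ⟩ := (mem_ES_iff hφ hs).1 hμ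
  obtain ⟨-, -, hβ'⟩ := (mem_ES_iff hφ hs).1 (heq ▸ hμ)
  linarith [entropy_add_integral_le_pressure hφ hs ((β + β') / 2) hprob hinv]

end EquilibriumStates

/-! ### Vanishing relative energies -/

section Vanishing

variable {d : ℕ} {A : Type} {φ : Cfg d A → ℝ}

/-- Two configurations that differ at finitely many sites always have the same energy. -/
def RelativeEnergiesVanish (φ : Cfg d A → ℝ) : Prop :=
  ∀ (R : ℕ) (x y : Cfg d A), AgreeOutside R x y → relativeEnergy φ x y = 0

theorem hamiltonian_const (φ : Cfg d A → ℝ) (N : ℕ) [NeZero N] (a : A) :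
    hamiltonian φ N (fun _ => a) = (N : ℝ) ^ d * φ fun _ => a := by
  have hconst (t : Torus d N) : periodize N (translate t fun _ => a) = fun _ => a := by
    funext m
    simp [periodize, translate_apply]
  simp [hamiltonian, hconst, ZMod.card]

variable [TopologicalSpace A] [CompactSpace A] {N : ℕ} [NeZero N] {L : ℕ}

theorem RelativeEnergiesVanish.abs_hamiltonian_sub_le (h : RelativeEnergiesVanish φ)
    (hφ : Continuous φ) (hs : SummableVariation φ) (hL : 2 * L < N) {v w : Torus d N → A}
    (hvw : TorusAgreeOutside 0 v w) :
    |hamiltonian φ N v - hamiltonian φ N w| ≤ truncationError φ 0 L := by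
  let x := periodize N v
  let y : Cfg d A := Function.update x 0 (periodize N w 0)
  have hy0 : y 0 = periodize N w 0 := Function.update_self (f := x) _ _
  have hyx {m : Fin d → ℤ} (hm : m ≠ 0) : y m = x m := Function.update_of_ne hm _ _
  have hxy : AgreeOutside 0 x y := fun m hm =>
    (hyx fun hm0 => hm.ne' (supNorm_eq_zero_iff.2 hm0)).symm
  have hy (m : Fin d → ℤ) (hm : supNorm m ≤ L) : periodize N w m = y m := by
    obtain rfl | hm0 := eq_or_ne m 0
    · exact hy0.symm
    · rw [hyx hm0]
      refine (hvw _ ?_).symm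
      rw [centered_toTorus (by omega)]
      exact Nat.pos_of_ne_zero (supNorm_eq_zero_iff.not.2 hm0)
  simpa [h 0 x y hxy] using
    abs_hamiltonian_sub_sub_relativeEnergy_le hφ hs hL hxy hvw (fun _ _ => rfl) hy

theorem RelativeEnergiesVanish.abs_hamiltonian_update_sub_le (h : RelativeEnergiesVanish φ)
    (hφ : Continuous φ) (hs : SummableVariation φ) (hL : 2 * L < N) (w : Torus d N → A)
    (t : Torus d N) (a : A) :
    |hamiltonian φ N (Function.update w t a) - hamiltonian φ N w| ≤ truncationError φ 0 L := by
  rw [← hamiltonian_translate φ t w, ← hamiltonian_translate φ t (Function.update w t a)]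
  refine h.abs_hamiltonian_sub_le hφ hs hL fun s hs0 => ?_
  have hs0 : s ≠ 0 := by
    rintro rfl
    have := supNorm_centered_toTorus_le (N := N) (0 : Fin d → ℤ)
    rw [map_zero, supNorm_eq_zero_iff.2 rfl] at this
    omega
  rw [translate_apply, translate_apply, Function.update_of_ne (by simpa using hs0)]

theorem RelativeEnergiesVanish.abs_hamiltonian_sub_le_card_mul (h : RelativeEnergiesVanish φ)
    (hφ : Continuous φ) (hs : SummableVariation φ) (hL : 2 * L < N) (v w : Torus d N → A) :
    |hamiltonian φ N v - hamiltonian φ N w| ≤ (N : ℝ) ^ d * truncationError φ 0 L := by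
  suffices hpiecewise : ∀ s : Finset (Torus d N),
      |hamiltonian φ N (s.piecewise v w) - hamiltonian φ N w| ≤ s.card * truncationError φ 0 L by
    simpa [ZMod.card] using hpiecewise Finset.univ
  intro s
  induction s using Finset.induction_on with
  | empty => simp
  | insert t s ht ih =>
    rw [Finset.piecewise_insert, Finset.card_insert_of_notMem ht]
    calc _ ≤ _ := abs_sub_le _ (hamiltonian φ N (s.piecewise v w)) _
      _ ≤ truncationError φ 0 L + s.card * truncationError φ 0 L :=
        add_le_add (h.abs_hamiltonian_update_sub_le hφ hs hL _ t _) ih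
      _ = _ := by
        push_cast
        ring

end Vanishing

section VanishingIntegral

variable {d : ℕ} {A : Type} [Finite A] [TopologicalSpace A] [DiscreteTopology A]
  [MeasurableSpace A] [BorelSpace A] {φ : Cfg d A → ℝ} {μ : Measure (Cfg d A)}
  [IsProbabilityMeasure μ]

theorem RelativeEnergiesVanish.abs_integral_sub_le (h : RelativeEnergiesVanish φ)
    (hφ : Continuous φ) (hs : SummableVariation φ) (hμ : Invariant μ) (a : A) {L N : ℕ}
    (hL : 2 * L < N) (r : ℕ) :
    |∫ x, φ x ∂μ - φ fun _ => a| ≤ boundaryError φ r N + truncationError φ 0 L := by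
  have : NeZero N := ⟨by omega⟩
  have hpos : (0 : ℝ) < (N : ℝ) ^ d := pow_pos (Nat.cast_pos.2 (NeZero.pos N)) d
  have : IsProbabilityMeasure (μ.map (boxPattern N)) :=
    Measure.isProbabilityMeasure_map (measurable_boxPattern N).aemeasurable
  have henergy : |∫ p, hamiltonian φ N (wrap N p) ∂μ.map (boxPattern N) -
      (N : ℝ) ^ d * φ fun _ => a| ≤ (N : ℝ) ^ d * truncationError φ 0 L := by
    have hbound : ∀ᵐ p ∂μ.map (boxPattern N), ‖hamiltonian φ N (wrap N p) -
        hamiltonian φ N fun _ => a‖ ≤ (N : ℝ) ^ d * truncationError φ 0 L :=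
      .of_forall fun p => h.abs_hamiltonian_sub_le_card_mul hφ hs hL _ _
    have hnorm := norm_integral_le_of_norm_le_const hbound
    rw [integral_sub .of_finite (integrable_const _)] at hnorm
    simpa [hamiltonian_const] using hnorm
  refine le_of_mul_le_mul_left ?_ hpos
  calc (N : ℝ) ^ d * |∫ x, φ x ∂μ - φ fun _ => a|
      = |(N : ℝ) ^ d * ∫ x, φ x ∂μ - (N : ℝ) ^ d * φ fun _ => a| := by
        rw [← mul_sub, abs_mul, abs_of_pos hpos]
    _ ≤ (N : ℝ) ^ d * boundaryError φ r N + (N : ℝ) ^ d * truncationError φ 0 L :=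
        (abs_sub_le _ _ _).trans
          (add_le_add (abs_integral_sub_integral_hamiltonian_le hφ hμ r N) henergy)
    _ = _ := (mul_add _ _ _).symm

theorem RelativeEnergiesVanish.integral_eq (h : RelativeEnergiesVanish φ) (hφ : Continuous φ)
    (hs : SummableVariation φ) (hμ : Invariant μ) (a : A) : ∫ x, φ x ∂μ = φ fun _ => a := by
  have hlim := hs.tendsto_osc.add (tendsto_truncationError hs 0)
  have hle (n : ℕ) : |∫ x, φ x ∂μ - φ fun _ => a| ≤ osc φ n + truncationError φ 0 n := by
    refine ge_of_tendsto ((tendsto_boundaryError φ n).add_const _) ?_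
    filter_upwards [eventually_gt_atTop (2 * n)] with N hN
    exact h.abs_integral_sub_le hφ hs hμ a hN n
  rw [add_zero] at hlim
  exact sub_eq_zero.1 (abs_nonpos_iff.1 (ge_of_tendsto' hlim hle))

end VanishingIntegral

section VanishingES

variable {d : ℕ} {A : Type} [Fintype A] [TopologicalSpace A] [DiscreteTopology A]
  [MeasurableSpace A] [BorelSpace A] {φ : Cfg d A → ℝ}

theorem RelativeEnergiesVanish.ES_eq (h : RelativeEnergiesVanish φ) (hφ : Continuous φ)
    (hs : SummableVariation φ) (β β' : ℝ) : ES φ β = ES φ β' := by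
  refine ES_eq_of_integral_eq hφ hs (fun μ ν hμ hμinv hν hνinv => ?_) β β'
  obtain ⟨x⟩ := nonempty_of_isProbabilityMeasure μ
  rw [h.integral_eq hφ hs hμinv (x 0), h.integral_eq hφ hs hνinv (x 0)]

end VanishingES

/-! ### Strict convexity of the pressure -/

theorem ratioBound_exp {ι P : Type*} [DecidableEq ι] {g : (ι → P) → ℝ} {p q : P} {s : ℝ}
    (h : ∀ i z, g (Function.update z i p) - g (Function.update z i q) ≤ s) :
    RatioBound (fun z => Real.exp (g z)) p q (Real.exp s) := fun i z => by
  rw [← Real.exp_add]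
  exact Real.exp_le_exp.2 (sub_le_iff_le_add.1 (h i z))

section TileEnergy

variable {d : ℕ} {A : Type} [TopologicalSpace A] [CompactSpace A] {φ : Cfg d A → ℝ} {M S : ℕ}
  [NeZero (M * (2 * S + 1))]

theorem supNorm_offset_le (k : Fin d → Fin (2 * S + 1)) : supNorm (offset S k) ≤ S :=
  supNorm_le_iff.2 fun i => by
    have := (k i).isLt
    simp only [offset, site, Pi.sub_apply]
    omega

theorem abs_hamiltonian_tilePattern_update_sub_le (hφ : Continuous φ) (hs : SummableVariation φ)
    (z : (Fin d → Fin M) → (Fin d → Fin (2 * S + 1)) → A) (i : Fin d → Fin M)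
    (p q : (Fin d → Fin (2 * S + 1)) → A) :
    |hamiltonian φ _ (tilePattern M _ (Function.update z i p)) -
      hamiltonian φ _ (tilePattern M _ (Function.update z i q))|
        ≤ ∑' k : Fin d → ℤ, osc φ (supNorm k - S) := by
  rw [← hamiltonian_translate φ (toTorus _ (tileCenter S i)) (tilePattern M _ _),
    ← hamiltonian_translate φ (toTorus _ (tileCenter S i))
      (tilePattern M _ (Function.update z i q))]
  exact (torusAgreeOutside_tilePattern_update
    (fun k hk => absurd (supNorm_offset_le k) hk.not_ge) z i).abs_hamiltonian_sub_le hφ hs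

variable {R : ℕ} {x y : Cfg d A}

theorem AgreeOutside.abs_hamiltonian_tilePattern_update_sub_sub_relativeEnergy_le
    (hxy : AgreeOutside R x y) (hφ : Continuous φ) (hs : SummableVariation φ)
    (z : (Fin d → Fin M) → (Fin d → Fin (2 * S + 1)) → A) (i : Fin d → Fin M) :
    |hamiltonian φ _ (tilePattern M _ (Function.update z i (x ∘ offset S))) -
      hamiltonian φ _ (tilePattern M _ (Function.update z i (y ∘ offset S))) -
        relativeEnergy φ x y| ≤ truncationError φ R S := by
  have hM : 1 ≤ M := Nat.pos_of_mul_pos_right (NeZero.pos (M * (2 * S + 1)))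
  rw [← hamiltonian_translate φ (toTorus _ (tileCenter S i)) (tilePattern M _ _),
    ← hamiltonian_translate φ (toTorus _ (tileCenter S i))
      (tilePattern M _ (Function.update z i (y ∘ offset S)))]
  exact abs_hamiltonian_sub_sub_relativeEnergy_le hφ hs (by nlinarith) hxy
    (torusAgreeOutside_tilePattern_update (fun k => hxy _) z i)
    (fun m => periodize_translate_tilePattern_update x z i)
    (fun m => periodize_translate_tilePattern_update y z i)

theorem ratioBound_exp_mul_hamiltonian_tilePattern (hφ : Continuous φ)
    (hs : SummableVariation φ) {b B : ℝ} (hb : |b| ≤ B) (p q : (Fin d → Fin (2 * S + 1)) → A) :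
    RatioBound (fun z => Real.exp (b * hamiltonian φ _ (tilePattern M (2 * S + 1) z))) p q
      (Real.exp (B * ∑' k : Fin d → ℤ, osc φ (supNorm k - S))) :=
  ratioBound_exp fun i z => by
    rw [← mul_sub]
    refine (le_abs_self _).trans ((abs_mul b _).trans_le ?_)
    exact mul_le_mul hb (abs_hamiltonian_tilePattern_update_sub_le hφ hs z i p q)
      (abs_nonneg _) ((abs_nonneg b).trans hb)

theorem AgreeOutside.ratioBound_exp_mul_hamiltonian (hxy : AgreeOutside R x y)
    (hφ : Continuous φ) (hs : SummableVariation φ) (b : ℝ) :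
    RatioBound (fun z => Real.exp (b * hamiltonian φ _ (tilePattern M (2 * S + 1) z)))
      (x ∘ offset S) (y ∘ offset S)
      (Real.exp (b * relativeEnergy φ x y + |b| * truncationError φ R S)) :=
  ratioBound_exp fun i z => by
    have h := mul_le_mul_of_nonneg_left
      (hxy.abs_hamiltonian_tilePattern_update_sub_sub_relativeEnergy_le hφ hs z i) (abs_nonneg b)
    rw [← abs_mul] at h
    linarith [(abs_le.1 h).2]

end TileEnergy

section TorusMidpoint

variable {d : ℕ} {A : Type} [Fintype A] {φ : Cfg d A → ℝ} {β β' : ℝ}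

theorem AgreeOutside.sq_partitionFunction_midpoint_le [TopologicalSpace A] {R : ℕ}
    {x y : Cfg d A} (hxy : AgreeOutside R x y) (hφ : Continuous φ) (hs : SummableVariation φ)
    {S : ℕ} {s : ℝ}
    (hs2 : (β - β') * relativeEnergy φ x y + (|β| + |β'|) * truncationError φ R S ≤ 2 * s)
    (hs0 : s ≤ 0) (M : ℕ) [NeZero (M * (2 * S + 1))] :
    partitionFunction φ ((β + β') / 2) (M * (2 * S + 1)) ^ 2 ≤
      gainFactor (Fintype.card ((Fin d → Fin (2 * S + 1)) → A))
          (Real.exp (max |β| |β'| * ∑' k : Fin d → ℤ, osc φ (supNorm k - S))) (Real.exp s) ^ M ^ d *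
        (partitionFunction φ β (M * (2 * S + 1)) * partitionFunction φ β' (M * (2 * S + 1))) := by
  have hsum (b : ℝ) : partitionFunction φ b (M * (2 * S + 1)) =
      ∑ z, Real.exp (b * hamiltonian φ _ (tilePattern M (2 * S + 1) z)) :=
    ((tilePattern M (2 * S + 1)).sum_comp _).symm
  have hosc : 0 ≤ ∑' k : Fin d → ℤ, osc φ (supNorm k - S) := tsum_nonneg fun _ => osc_nonneg φ _
  have hcard : Fintype.card (Fin d → Fin M) = M ^ d := by simp
  rw [hsum, hsum, hsum, ← hcard]
  refine sq_sum_le_gainFactor_pow (Real.one_le_exp (by positivity)) (Real.exp_pos s).le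
    (Real.exp_le_one_iff.2 hs0) ?_ (fun _ => (Real.exp_pos _).le) (fun _ => (Real.exp_pos _).le)
    (fun _ => (Real.exp_pos _).le) (fun z => le_of_eq ?_)
    (ratioBound_exp_mul_hamiltonian_tilePattern hφ hs (le_max_left _ _))
    (ratioBound_exp_mul_hamiltonian_tilePattern hφ hs (le_max_right _ _))
    (hxy.ratioBound_exp_mul_hamiltonian hφ hs β)
    (hxy.symm.ratioBound_exp_mul_hamiltonian hφ hs β')
  · rw [relativeEnergy_symm φ x y, ← Real.exp_add, ← Real.exp_nat_mul]
    exact Real.exp_le_exp.2 (by push_cast; linarith)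
  · rw [← Real.exp_add, ← Real.exp_nat_mul]
    congr 1
    push_cast
    ring

theorem two_mul_torusPressure_midpoint_add_le [Nonempty A] {θ : ℝ} (hθ : 0 < θ) {M m : ℕ}
    [NeZero (M * m)] (h : partitionFunction φ ((β + β') / 2) (M * m) ^ 2 ≤
      θ ^ M ^ d * (partitionFunction φ β (M * m) * partitionFunction φ β' (M * m))) :
    2 * torusPressure φ ((β + β') / 2) (M * m) + -Real.log θ / (m : ℝ) ^ d ≤
      torusPressure φ β (M * m) + torusPressure φ β' (M * m) := by
  have hZ (b : ℝ) := partitionFunction_pos φ b (M * m)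
  have hM : (M : ℝ) ≠ 0 := Nat.cast_ne_zero.2 (left_ne_zero_of_mul (NeZero.ne (M * m)))
  have hvolume : (((M * m : ℕ) : ℝ) ^ d)⁻¹ * (M : ℝ) ^ d = ((m : ℝ) ^ d)⁻¹ := by
    rw [Nat.cast_mul, mul_pow, mul_inv_rev, inv_mul_cancel_right₀ (pow_ne_zero d hM)]
  have hlog := Real.log_le_log (pow_pos (hZ _) 2) h
  rw [Real.log_mul (pow_pos hθ _).ne' (mul_pos (hZ β) (hZ β')).ne',
    Real.log_mul (hZ β).ne' (hZ β').ne', Real.log_pow, Real.log_pow, Nat.cast_pow,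
    Nat.cast_two] at hlog
  have hscaled := mul_le_mul_of_nonneg_left hlog
    (inv_nonneg.2 (pow_nonneg (Nat.cast_nonneg (α := ℝ) (M * m)) d))
  rw [mul_add, ← mul_assoc _ _ (Real.log θ), hvolume] at hscaled
  simp only [torusPressure]
  rw [neg_div, div_eq_inv_mul (Real.log θ)]
  linarith

end TorusMidpoint

section PressureMidpoint

variable {d : ℕ} {A : Type} [Fintype A] [TopologicalSpace A] {φ : Cfg d A → ℝ} {R : ℕ}
  {x y : Cfg d A} {β β' : ℝ}

theorem AgreeOutside.exists_eventually_two_mul_torusPressure_midpoint_add_le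
    (hxy : AgreeOutside R x y) (hφ : Continuous φ) (hs : SummableVariation φ)
    (hD : 0 < relativeEnergy φ x y)
    (hβ : β < β') : ∃ δ > 0, ∀ᶠ j : ℕ in atTop,
      2 * torusPressure φ ((β + β') / 2) j.factorial + δ ≤
        torusPressure φ β j.factorial + torusPressure φ β' j.factorial := by
  have : Nonempty A := ⟨x 0⟩
  have hlim : Tendsto (fun S => (β - β') * relativeEnergy φ x y +
      (|β| + |β'|) * truncationError φ R S) atTop (𝓝 ((β - β') * relativeEnergy φ x y)) := by
    simpa using ((tendsto_truncationError hs R).const_mul (|β| + |β'|)).const_add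
      ((β - β') * relativeEnergy φ x y)
  obtain ⟨S, hS⟩ := (hlim.eventually_lt_const (mul_neg_of_neg_of_pos (sub_neg.2 hβ) hD)).exists
  set s := ((β - β') * relativeEnergy φ x y + (|β| + |β'|) * truncationError φ R S) / 2 with hs2
  have hneg : s < 0 := by linarith
  set c := Real.exp (max |β| |β'| * ∑' k : Fin d → ℤ, osc φ (supNorm k - S))
  have hc : 1 ≤ c := Real.one_le_exp
    (mul_nonneg (le_max_of_le_left (abs_nonneg β)) (tsum_nonneg fun _ => osc_nonneg φ _))
  have hcard : 0 < Fintype.card ((Fin d → Fin (2 * S + 1)) → A) := Fintype.card_pos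
  set θ := gainFactor (Fintype.card ((Fin d → Fin (2 * S + 1)) → A)) c (Real.exp s)
  have hθ : 0 < θ := gainFactor_pos hcard hc (Real.exp_pos s).le (Real.exp_le_one_iff.2 hneg.le)
  have hθ1 : θ < 1 := gainFactor_lt_one hcard (one_pos.trans_le hc) (Real.exp_lt_one_iff.2 hneg)
  refine ⟨-Real.log θ / ((2 * S + 1 : ℕ) : ℝ) ^ d,
    div_pos (neg_pos.2 (Real.log_neg hθ hθ1)) (by positivity), ?_⟩
  filter_upwards [eventually_ge_atTop (2 * S + 1)] with j hj
  obtain ⟨M, hM⟩ := Nat.dvd_factorial (Nat.succ_pos (2 * S)) hj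
  suffices hN : ∀ (N : ℕ) [NeZero N], N = M * (2 * S + 1) →
      2 * torusPressure φ ((β + β') / 2) N + -Real.log θ / ((2 * S + 1 : ℕ) : ℝ) ^ d ≤
        torusPressure φ β N + torusPressure φ β' N from hN _ (hM.trans (mul_comm _ _))
  rintro N _ rfl
  exact two_mul_torusPressure_midpoint_add_le hθ
    (hxy.sq_partitionFunction_midpoint_le hφ hs (by linarith) hneg.le M)

variable [DiscreteTopology A] [MeasurableSpace A] [BorelSpace A]

theorem AgreeOutside.pressure_midpoint_lt (hxy : AgreeOutside R x y) (hφ : Continuous φ)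
    (hs : SummableVariation φ) (hD : 0 < relativeEnergy φ x y) (hβ : β < β') :
    2 * pressure φ ((β + β') / 2) < pressure φ β + pressure φ β' := by
  have : Nonempty A := ⟨x 0⟩
  have hlim := tendsto_torusPressure_factorial hφ hs
  obtain ⟨δ, hδ, hle⟩ :=
    hxy.exists_eventually_two_mul_torusPressure_midpoint_add_le hφ hs hD hβ
  exact (lt_add_of_pos_right _ hδ).trans_le (le_of_tendsto_of_tendsto
    (((hlim _).const_mul 2).add_const δ) ((hlim β).add (hlim β')) hle)

end PressureMidpoint

theorem exists_relativeEnergy_pos {d : ℕ} {A : Type} {φ : Cfg d A → ℝ}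
    (h : ¬ RelativeEnergiesVanish φ) :
    ∃ (R : ℕ) (x y : Cfg d A), AgreeOutside R x y ∧ 0 < relativeEnergy φ x y := by
  simp only [RelativeEnergiesVanish, not_forall] at h
  obtain ⟨R, x, y, hxy, hne⟩ := h
  obtain hlt | hgt := lt_or_gt_of_ne hne
  · exact ⟨R, y, x, hxy.symm, by rwa [relativeEnergy_symm, neg_pos]⟩
  · exact ⟨R, x, y, hxy, hgt⟩

section Dichotomy

variable {d : ℕ} {A : Type} [Fintype A] [TopologicalSpace A] [DiscreteTopology A]
  [MeasurableSpace A] [BorelSpace A] {φ : Cfg d A → ℝ}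

theorem ES_const_or_injective (hφ : Continuous φ) (hs : SummableVariation φ) :
    (∀ β β', ES φ β = ES φ β') ∨ Function.Injective (ES φ) := by
  refine or_iff_not_imp_left.2 fun hconst => ?_
  obtain ⟨R, x, y, hxy, hD⟩ := exists_relativeEnergy_pos (mt (·.ES_eq hφ hs) hconst)
  have : Nonempty A := ⟨x 0⟩
  refine Function.Injective.of_lt_imp_ne fun β β' hβ => ?_
  exact ES_ne_of_pressure_midpoint_lt hφ hs (hxy.pressure_midpoint_lt hφ hs hD hβ)

end Dichotomy

/-- **Theorem B.** If `Σ_{n ≥ 1} n^{d-1} var_n φ < ∞`, then the continuous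
potential `φ` cannot have a freezing phase transition. -/
theorem statement1 (d : ℕ) (hd : 1 ≤ d) (A : Type) [Fintype A] [TopologicalSpace A]
    [DiscreteTopology A] [MeasurableSpace A] [BorelSpace A]
    (φ : Cfg d A → ℝ) (hφ : Continuous φ)
    (hsum : Summable fun n : ℕ => ((n + 1 : ℕ) : ℝ) ^ (d - 1) * varPot φ (n + 1)) :
    ¬ ∃ βc : ℝ, FreezingPT φ βc := by
  rintro ⟨βc, hfrozen, hchange⟩
  obtain hconst | hinj := ES_const_or_injective hφ hsum
  · exact hchange (βc - 1) (βc + 1) (sub_one_lt βc) (lt_add_one βc) (hconst _ _)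
  · have := hinj (hfrozen (βc + 1) (βc + 2) (by linarith) (by linarith))
    linarith

end Freezing
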